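/- arXiv:1902.09146 — 2 statements merged into one kernel-verified Lean document; each statement's English description precedes it below -/
import Mathlib

section
/- Let f ∈ ℂ[x_0,x_1,x_2]_4 be a homogeneous quartic such that the plane curve V(f) ⊂ ℙ^2 is smooth. Then the Milnor algebra M(f) = R/J(f) has the Strong Lefschetz Property. -/
/-!
Write `A = R ⧸ J`, where `J` is generated by three cubics without common zero. The Koszul complex of
the cubics is exact, and comparing it with the Koszul complex of the variables shows that the socle
of `A` is one-dimensional, of degree six. So a functional `φ` on forms of degree six turns
multiplication into perfect pairings, and we need a linear form `L = z - a x - b y` for which the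
pairings `(q, p) ↦ φ (L ^ (6 - 2 i) q p)` on forms of degree `i = 0, 1, 2` are nondegenerate. This
is an open condition on `(a, b)`, so it can be checked on the generic line, with `a` and `b`
indeterminates.

*The cases `i = 0, 1`.* Up to constants and a change of basis, the Gram matrix of
`(ℓ, ℓ') ↦ φ (L ^ 4 ℓ ℓ')` is the Hessian of the homogenization of `F (a, b) = φ (L ^ 6) ≠ 0`. If
its determinant vanished, then by the Gordan–Noether theorem there would be a fixed linear form
`c ≠ 0` with `φ (c L ^ 5) = 0` for all `L`. As powers of linear forms span all forms, this gives
`c ∈ J`, which is absurd.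

*The case `i = 2`.* A quadric `q` in the kernel gives, over `K = ℂ(a, b)` with its derivations `∂ₐ`,
`∂_b`, a relation `x (B₀ · f) + y (B₁ · f) + L (s · f) = L ^ 2 q` with `B₀, B₁, s ∈ K ^ 3`.
Restriction to `L = 0` makes `(B₀, B₁)` a linear syzygy of the restricted cubics, which is unique up
to scaling. The derivatives of the relation restrict to linear syzygies too, so
`∂ₐB₀ = c₀ B₀ + s`, `∂ₐB₁ = c₀ B₁`, `∂_bB₀ = c₁ B₀`, `∂_bB₁ = c₁ B₁ + s`. Let
`γ = ∂_b c₀ - ∂ₐ c₁`. If `γ ≠ 0`, integrability makes the minors of `(B₀, B₁)` vanish, which is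
impossible for a linear syzygy. If `γ = 0`, then `∂ₐ (L ^ 2 q) = c₀ L ^ 2 q`, and since
`∂ₐ L = -x` this forces arbitrarily high powers of `L` to divide `L ^ 2 q`, so `q = 0`.
-/

open MvPolynomial Module

/-- The Jacobian ideal `J(f)`, generated by the first order partial derivatives of `f`. -/
noncomputable def jacobianIdeal {N : ℕ} (f : MvPolynomial (Fin N) ℂ) :
    Ideal (MvPolynomial (Fin N) ℂ) :=
  Ideal.span (Set.range fun i => pderiv i f)

/-- The degree-`m` graded piece of the quotient `R ⧸ I`, namely the image of the
space of homogeneous polynomials of degree `m`. -/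
noncomputable def gradedPiece {N : ℕ} (I : Ideal (MvPolynomial (Fin N) ℂ)) (m : ℕ) :
    Submodule ℂ (MvPolynomial (Fin N) ℂ ⧸ I) :=
  Submodule.map (Ideal.Quotient.mkₐ ℂ I).toLinearMap (homogeneousSubmodule (Fin N) ℂ m)

/-- The Strong Lefschetz Property for the graded quotient algebra `R ⧸ I` with top
(socle) degree `T`: there is a linear form `ℓ` such that for all `i, k` with
`i + k ≤ T`, multiplication by `ℓ^k` from the degree-`i` piece to the degree-`(i+k)`
piece is injective or surjective. -/
def hasSLPQuot {N : ℕ} (I : Ideal (MvPolynomial (Fin N) ℂ)) (T : ℕ) : Prop :=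
  ∃ ℓ ∈ homogeneousSubmodule (Fin N) ℂ 1,
    ∀ i k : ℕ, i + k ≤ T →
      (∀ v ∈ gradedPiece I i, (Ideal.Quotient.mk I ℓ) ^ k * v = 0 → v = 0) ∨
      (∀ w ∈ gradedPiece I (i + k), ∃ v ∈ gradedPiece I i,
        (Ideal.Quotient.mk I ℓ) ^ k * v = w)

open Matrix

/-! ### The Koszul complex of three elements -/

section Koszul

variable {R : Type*} [CommRing R]

/-- Exactness, except at the last term, of the Koszul complex `0 → R → R³ → R³ → R` of
`f ∈ R³`, whose maps are `u ↦ u • f`, `v ↦ f ⨯₃ v` and `w ↦ f ⬝ᵥ w`. -/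
structure KoszulExact (f : Fin 3 → R) : Prop where
  eq_zero_of_smul_eq_zero : ∀ u : R, u • f = 0 → u = 0
  exists_eq_smul : ∀ v, f ⨯₃ v = 0 → ∃ u : R, v = u • f
  exists_eq_cross : ∀ w, f ⬝ᵥ w = 0 → ∃ v, w = f ⨯₃ v

theorem smul_sub_dotProduct_smul (f α v : Fin 3 → R) :
    (α ⬝ᵥ f) • v - (α ⬝ᵥ v) • f = (f ⨯₃ v) ⨯₃ α := by
  rw [cross_cross_eq_smul_sub_smul, dotProduct_comm f α, dotProduct_comm v α]

theorem exists_eq_smul_of_cross_eq_zero {f α β : Fin 3 → R}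
    (hα : ∀ u, (α ⬝ᵥ f) * u = 0 → u = 0)
    (hβ : ∀ u, α ⬝ᵥ f ∣ (β ⬝ᵥ f) * u → α ⬝ᵥ f ∣ u)
    {v : Fin 3 → R} (hv : f ⨯₃ v = 0) : ∃ u : R, v = u • f := by
  have hparallel (δ : Fin 3 → R) : (δ ⬝ᵥ f) • v = (δ ⬝ᵥ v) • f := by
    rw [← sub_eq_zero, smul_sub_dotProduct_smul, hv, map_zero, LinearMap.zero_apply]
  obtain ⟨u, hu⟩ := hβ (α ⬝ᵥ v) ⟨β ⬝ᵥ v, by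
    rw [← smul_eq_mul, ← dotProduct_smul, hparallel, dotProduct_smul, smul_eq_mul, mul_comm]⟩
  refine ⟨u, sub_eq_zero.1 (funext fun i => hα _ ?_)⟩
  have := congrFun (hparallel α) i
  simp only [Pi.smul_apply, smul_eq_mul, Pi.sub_apply] at this ⊢
  rw [hu] at this
  linear_combination this

theorem exists_eq_cross_of_dotProduct_eq_zero {f α β γ : Fin 3 → R}
    (hα : ∀ u, (α ⬝ᵥ f) * u = 0 → u = 0)
    (hβ : ∀ u, α ⬝ᵥ f ∣ (β ⬝ᵥ f) * u → α ⬝ᵥ f ∣ u)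
    (hγ : ∀ u, (γ ⬝ᵥ f) * u ∈ Ideal.span {α ⬝ᵥ f, β ⬝ᵥ f} → u ∈ Ideal.span {α ⬝ᵥ f, β ⬝ᵥ f})
    {w : Fin 3 → R} (hw : f ⬝ᵥ w = 0) : ∃ v, w = f ⨯₃ v := by
  -- `y = w ⨯₃ α` satisfies `f ⨯₃ y = a • w`, so `y` is parallel to `f` modulo `a`.
  set y := w ⨯₃ α with hy
  have hfy : f ⨯₃ y = (α ⬝ᵥ f) • w := by
    rw [hy, cross_cross_eq_smul_sub_smul', dotProduct_comm w, hw, zero_smul, sub_zero,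
      dotProduct_comm]
  have hparallel : (β ⬝ᵥ f) • y - (β ⬝ᵥ y) • f = (α ⬝ᵥ f) • (w ⨯₃ β) := by
    rw [smul_sub_dotProduct_smul, hfy, map_smul, LinearMap.smul_apply]
  obtain ⟨u, r, hur⟩ := Ideal.mem_span_pair.1 <| hγ (β ⬝ᵥ y) <| Ideal.mem_span_pair.2
    ⟨-(γ ⬝ᵥ (w ⨯₃ β)), γ ⬝ᵥ y, by
      have := congrArg (γ ⬝ᵥ ·) hparallel
      simp only [dotProduct_sub, dotProduct_smul, smul_eq_mul] at this
      linear_combination this⟩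
  have hdvd (i : Fin 3) : α ⬝ᵥ f ∣ (y - r • f) i := hβ _ ⟨(u • f + w ⨯₃ β) i, by
    have := congrFun hparallel i
    simp only [Pi.sub_apply, Pi.add_apply, Pi.smul_apply, smul_eq_mul] at this ⊢
    linear_combination this - f i * hur⟩
  choose v hv using hdvd
  have hyv : y = r • f + (α ⬝ᵥ f) • v := by
    rw [← sub_eq_iff_eq_add']; exact funext hv
  refine ⟨v, sub_eq_zero.1 (funext fun i => hα _ ?_)⟩
  rw [hyv, map_add, map_smul, map_smul, cross_self, smul_zero, zero_add] at hfy
  have := congrFun hfy i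
  simp only [Pi.smul_apply, smul_eq_mul, Pi.sub_apply] at this ⊢
  linear_combination -this

end Koszul

section Radical

variable {σ τ k : Type*} [CommRing k]

/-- The ideal `(f₀, f₁, f₂)` contains a power of every variable, that is, the forms `fᵢ` have no
common zero over an algebraic closure. -/
def VarsMemRadical (f : Fin 3 → MvPolynomial σ k) : Prop :=
  ∀ i, X i ∈ (Ideal.span (Set.range f)).radical

theorem mem_span_range_iff_dotProduct {R ι : Type*} [CommRing R] [Fintype ι] {f : ι → R} {p : R} :
    p ∈ Ideal.span (Set.range f) ↔ ∃ w, w ⬝ᵥ f = p :=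
  Ideal.mem_span_range_iff_exists_fun

theorem VarsMemRadical.exists_dotProduct {f : Fin 3 → MvPolynomial σ k} (hf : VarsMemRadical f)
    (i : σ) : ∃ (n : ℕ) (w : Fin 3 → MvPolynomial σ k), w ⬝ᵥ f = X i ^ n := by
  obtain ⟨n, hn⟩ := hf i
  exact ⟨n, mem_span_range_iff_dotProduct.1 hn⟩

theorem VarsMemRadical.map {k' : Type*} [CommRing k'] {f : Fin 3 → MvPolynomial σ k}
    (hf : VarsMemRadical f) (g : MvPolynomial σ k →+* MvPolynomial τ k')
    (hg : ∀ j, ∃ i, g (X i) = X j) : VarsMemRadical fun l => g (f l) := by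
  intro j
  obtain ⟨i, hi⟩ := hg j
  have hmap := Ideal.map_radical_le g (Ideal.mem_map_of_mem g (hf i))
  rwa [hi, Ideal.map_span, ← Set.range_comp] at hmap

theorem varsMemRadical_X : VarsMemRadical (X : Fin 3 → MvPolynomial (Fin 3) k) :=
  fun i => Ideal.le_radical (Ideal.subset_span ⟨i, rfl⟩)

theorem mem_span_X_pow_of_X_pow_mul_mem {s : Set σ} {e : σ → ℕ} {j : σ} (hj : j ∉ s) {n : ℕ}
    {u : MvPolynomial σ k} (h : X j ^ n * u ∈ Ideal.span ((fun i => X i ^ e i) '' s)) :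
    u ∈ Ideal.span ((fun i => X i ^ e i) '' s) := by
  have himage : (fun i => X i ^ e i : σ → MvPolynomial σ k) '' s =
      (fun m => monomial m 1) '' ((fun i => Finsupp.single i (e i)) '' s) := by
    simp only [Set.image_image, X_pow_eq_monomial]
  rw [himage, mem_ideal_span_monomial_image] at h ⊢
  intro m hm
  obtain ⟨-, ⟨i, hi, rfl⟩, hle⟩ := h (m + Finsupp.single j n) (by
    rwa [MvPolynomial.mem_support_iff, X_pow_eq_monomial, add_comm, coeff_monomial_mul, one_mul,
      ← MvPolynomial.mem_support_iff])
  refine ⟨_, ⟨i, hi, rfl⟩, Finsupp.single_le_iff.2 ?_⟩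
  have hij : j ≠ i := fun h => hj (h ▸ hi)
  simpa [Finsupp.single_apply, hij] using hle i

end Radical

section KoszulMvPolynomial

variable {σ k : Type*} [Field k]

theorem X_pow_dvd_of_dvd_X_pow_mul {i j : σ} (hij : i ≠ j) {m n : ℕ} {u : MvPolynomial σ k}
    (h : X i ^ m ∣ X j ^ n * u) : X i ^ m ∣ u := by
  rw [← Ideal.mem_span_singleton] at h ⊢
  have := mem_span_X_pow_of_X_pow_mul_mem (s := {i}) (e := fun _ => m) hij.symm (u := u) (n := n)
  simp only [Set.image_singleton] at this
  exact this h

theorem VarsMemRadical.exists_eq_smul {f : Fin 3 → MvPolynomial σ k} (hf : VarsMemRadical f)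
    {i j : σ} (hij : i ≠ j) {v : Fin 3 → MvPolynomial σ k} (hv : f ⨯₃ v = 0) :
    ∃ u : MvPolynomial σ k, v = u • f := by
  obtain ⟨m, α, hα⟩ := hf.exists_dotProduct i
  obtain ⟨n, β, hβ⟩ := hf.exists_dotProduct j
  refine exists_eq_smul_of_cross_eq_zero (α := α) (β := β) ?_ ?_ hv <;> rw [hα]
  · exact fun u hu => (mul_eq_zero.1 hu).resolve_left (pow_ne_zero _ (X_ne_zero _))
  · rw [hβ]
    exact fun u => X_pow_dvd_of_dvd_X_pow_mul hij

theorem VarsMemRadical.koszulExact {f : Fin 3 → MvPolynomial (Fin 3) k} (hf : VarsMemRadical f) :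
    KoszulExact f := by
  choose n α hα using hf.exists_dotProduct
  have hreg (i : Fin 3) (u : MvPolynomial (Fin 3) k) (hu : α i ⬝ᵥ f * u = 0) : u = 0 :=
    (mul_eq_zero.1 hu).resolve_left (hα i ▸ pow_ne_zero _ (X_ne_zero _))
  refine ⟨fun u hu => hreg 0 u ?_, fun v => hf.exists_eq_smul (zero_ne_one), fun w =>
    exists_eq_cross_of_dotProduct_eq_zero (α := α 0) (β := α 1) (γ := α 2) (hreg 0) ?_ ?_⟩
  · rw [mul_comm, ← smul_eq_mul, ← dotProduct_smul, hu, dotProduct_zero]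
  · simp only [hα]
    exact fun u => X_pow_dvd_of_dvd_X_pow_mul zero_ne_one
  · intro u
    simp only [hα]
    have := mem_span_X_pow_of_X_pow_mul_mem (s := {0, 1}) (e := n) (j := 2) (by decide)
      (n := n 2) (u := u)
    rwa [Set.image_pair] at this

end KoszulMvPolynomial

/-! ### The socle of the quotient by three forms -/

section Socle

variable {R : Type*} [CommRing R]

theorem KoszulExact.exists_of_sum_smul_eq_zero {ι : Type*} {x : Fin 3 → R} (hx : KoszulExact x)
    {b : Fin 3 → ι → R} (hb : ∑ i, x i • b i = 0) :
    ∃ W : Fin 3 → ι → R, b 0 = x 1 • W 2 - x 2 • W 1 ∧ b 1 = x 2 • W 0 - x 0 • W 2 ∧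
      b 2 = x 0 • W 1 - x 1 • W 0 := by
  have hcol (l : ι) : ∃ w, (fun i => b i l) = x ⨯₃ w := hx.exists_eq_cross _ (by
    simpa [dotProduct] using congrFun hb l)
  choose W hW using hcol
  refine ⟨fun i l => W l i, ?_, ?_, ?_⟩ <;> ext l
  · simpa [cross_apply] using congrFun (hW l) 0
  · simpa [cross_apply] using congrFun (hW l) 1
  · simpa [cross_apply] using congrFun (hW l) 2

theorem KoszulExact.exists_eq_smul_of_smul_eq_smul {ι : Type*} {x : Fin 3 → R}
    (hx : KoszulExact x) {m : Fin 3 → ι → R} (h0 : x 1 • m 2 = x 2 • m 1)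
    (h1 : x 2 • m 0 = x 0 • m 2) (h2 : x 0 • m 1 = x 1 • m 0) :
    ∃ n : ι → R, ∀ j, m j = x j • n := by
  have hcol (l : ι) : ∃ u : R, (fun i => m i l) = u • x := hx.exists_eq_smul _ (by
    ext i
    have h0 := congrFun h0 l
    have h1 := congrFun h1 l
    have h2 := congrFun h2 l
    simp only [Pi.smul_apply, smul_eq_mul] at h0 h1 h2
    fin_cases i <;> simp [cross_apply, h0, h1, h2])
  choose n hn using hcol
  exact ⟨n, fun j => funext fun l => by simpa [mul_comm] using congrFun (hn l) j⟩

-- A diagram chase between the Koszul complexes of `x` and `f`: the hypothesis lifts `u`, while `a`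
-- and `s` lift the next two terms.
theorem KoszulExact.exists_cross_of_socle {f x : Fin 3 → R} (hf : KoszulExact f)
    {u : R} {m : Fin 3 → Fin 3 → R} (hm : ∀ j, x j * u = m j ⬝ᵥ f) :
    ∃ (a : Fin 3 → Fin 3 → R) (s : R), x 1 • m 2 - x 2 • m 1 = f ⨯₃ a 0 ∧
      x 2 • m 0 - x 0 • m 2 = f ⨯₃ a 1 ∧ x 0 • m 1 - x 1 • m 0 = f ⨯₃ a 2 ∧
      ∑ i, x i • a i = s • f := by
  have hsyz (i j : Fin 3) : ∃ v, x i • m j - x j • m i = f ⨯₃ v := hf.exists_eq_cross _ (by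
    rw [dotProduct_comm, sub_dotProduct, smul_dotProduct, smul_dotProduct, ← hm, ← hm, smul_eq_mul,
      smul_eq_mul]
    ring)
  choose v hv using hsyz
  obtain ⟨s, hs⟩ := hf.exists_eq_smul (x 0 • v 1 2 + x 1 • v 2 0 + x 2 • v 0 1) (by
    simp only [map_add, map_smul, ← hv]
    module)
  exact ⟨![v 1 2, v 2 0, v 0 1], s, hv 1 2, hv 2 0, hv 0 1, by simpa [Fin.sum_univ_three] using hs⟩

-- The chase backwards: `m` is a boundary for `x` up to a boundary for `f` and the cofactors of `Φ`.
theorem KoszulExact.exists_eq_smul_add_cross_of_socle {f x : Fin 3 → R} (hf : KoszulExact f)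
    (hx : KoszulExact x) {Φ : Fin 3 → Fin 3 → R} (hΦ : f = x 0 • Φ 0 + x 1 • Φ 1 + x 2 • Φ 2)
    {u : R} {m : Fin 3 → Fin 3 → R} (hm : ∀ j, x j * u = m j ⬝ᵥ f) :
    ∃ (n : Fin 3 → R) (W : Fin 3 → Fin 3 → R) (s : R), ∀ j,
      m j - f ⨯₃ W j + s • ![Φ 1 ⨯₃ Φ 2, Φ 2 ⨯₃ Φ 0, Φ 0 ⨯₃ Φ 1] j = x j • n := by
  obtain ⟨a, s, h0, h1, h2, hs⟩ := hf.exists_cross_of_socle hm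
  obtain ⟨W, hW0, hW1, hW2⟩ := hx.exists_of_sum_smul_eq_zero (b := fun i => a i - s • Φ i) (by
    rw [Fin.sum_univ_three] at hs ⊢
    linear_combination (norm := module) hs + s • hΦ)
  have hcross (i : Fin 3) :
      f ⨯₃ Φ i = x 0 • Φ 0 ⨯₃ Φ i + x 1 • Φ 1 ⨯₃ Φ i + x 2 • Φ 2 ⨯₃ Φ i := by
    conv_lhs => rw [hΦ]
    simp only [map_add, map_smul, LinearMap.add_apply, LinearMap.smul_apply]
  replace hW0 := congrArg (f ⨯₃ ·) hW0
  replace hW1 := congrArg (f ⨯₃ ·) hW1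
  replace hW2 := congrArg (f ⨯₃ ·) hW2
  simp only [map_sub, map_smul, hcross, cross_self] at hW0 hW1 hW2
  obtain ⟨n, hn⟩ := hx.exists_eq_smul_of_smul_eq_smul
    (m := fun j => m j - f ⨯₃ W j + s • ![Φ 1 ⨯₃ Φ 2, Φ 2 ⨯₃ Φ 0, Φ 0 ⨯₃ Φ 1] j)
    (by simp only [cons_val]
        rw [← cross_anticomm (Φ 0) (Φ 1)] at hW0
        linear_combination (norm := module) h0 + hW0)
    (by simp only [cons_val]
        rw [← cross_anticomm (Φ 1) (Φ 2)] at hW1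
        linear_combination (norm := module) h1 + hW1)
    (by simp only [cons_val]
        rw [← cross_anticomm (Φ 2) (Φ 0)] at hW2
        linear_combination (norm := module) h2 + hW2)
  exact ⟨n, W, s, hn⟩

theorem KoszulExact.exists_eq_dotProduct_sub_of_socle {f x : Fin 3 → R} (hf : KoszulExact f)
    (hx : KoszulExact x) {Φ : Matrix (Fin 3) (Fin 3) R} (hΦ : f = x ᵥ* Φ) {u : R}
    {m : Fin 3 → Fin 3 → R} (hm : ∀ j, x j * u = m j ⬝ᵥ f) :
    ∃ (n : Fin 3 → R) (s : R), u = n ⬝ᵥ f - s * Φ.det := by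
  have hΦ' : f = x 0 • Φ.row 0 + x 1 • Φ.row 1 + x 2 • Φ.row 2 := by
    rw [hΦ, vecMul_eq_sum, Fin.sum_univ_three]
    rfl
  obtain ⟨n, W, s, hn⟩ := hf.exists_eq_smul_add_cross_of_socle hx hΦ' hm
  have hdet (j : Fin 3) : f ⬝ᵥ ![Φ.row 1 ⨯₃ Φ.row 2, Φ.row 2 ⨯₃ Φ.row 0, Φ.row 0 ⨯₃ Φ.row 1] j =
      x j * Φ.det := by
    have hdet : Φ.det = Φ.row 0 ⬝ᵥ Φ.row 1 ⨯₃ Φ.row 2 := by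
      rw [triple_product_eq_det]
      exact congrArg det (by ext i j; fin_cases i <;> rfl)
    rw [hΦ', hdet]
    fin_cases j
    · simp
    · simp [triple_product_permutation (Φ.row 0)]
    · simp [triple_product_permutation (Φ.row 2)]
  refine ⟨n, s, sub_eq_zero.1 <| hx.eq_zero_of_smul_eq_zero _ <| funext fun j => ?_⟩
  have := congrArg (f ⬝ᵥ ·) (hn j)
  simp only [dotProduct_add, dotProduct_sub, dot_self_cross, dotProduct_smul, hdet,
    dotProduct_comm f (m j), dotProduct_comm f n, ← hm, smul_eq_mul] at this
  simp only [Pi.smul_apply, smul_eq_mul, Pi.zero_apply] at this ⊢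
  linear_combination this

end Socle

/-! ### Duality for the quotient by three forms -/

section Degree

variable {σ ι R : Type*} [CommRing R]

theorem mem_pow_idealOfVars_of_isHomogeneous {p : MvPolynomial σ R} {d : ℕ}
    (hp : p.IsHomogeneous d) : p ∈ idealOfVars σ R ^ d :=
  (mem_pow_idealOfVars_iff' d p).2 fun _ hm => hp.coeff_eq_zero hm.ne

theorem eq_zero_of_mem_pow_idealOfVars {p : MvPolynomial σ R} {d : ℕ}
    (hp : p ∈ idealOfVars σ R ^ d) (hd : p.totalDegree < d) : p = 0 := by
  ext m
  by_cases hm : m.degree < d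
  · exact (mem_pow_idealOfVars_iff' d p).1 hp m hm
  · exact coeff_eq_zero_of_totalDegree_lt (hd.trans_le (not_lt.1 hm))

theorem span_le_pow_idealOfVars {f : ι → MvPolynomial σ R} {d : ℕ}
    (hf : ∀ i, (f i).IsHomogeneous d) : Ideal.span (Set.range f) ≤ idealOfVars σ R ^ d :=
  Ideal.span_le.2 (Set.range_subset_iff.2 fun i => mem_pow_idealOfVars_of_isHomogeneous (hf i))

theorem homogeneousComponent_mem_span {f : ι → MvPolynomial σ R} {d : ℕ}
    (hf : ∀ i, (f i).IsHomogeneous d) {p : MvPolynomial σ R}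
    (hp : p ∈ Ideal.span (Set.range f)) (n : ℕ) :
    homogeneousComponent n p ∈ Ideal.span (Set.range f) := by
  let := MvPolynomial.gradedAlgebra (σ := σ) (R := R)
  refine homogeneousComponent_mem_of_mem (Ideal.homogeneous_span _ _ ?_) hp n
  rintro _ ⟨i, rfl⟩
  exact ⟨d, hf i⟩

end Degree

section Duality

variable {k : Type*} [Field k] {f : Fin 3 → MvPolynomial (Fin 3) k}

theorem VarsMemRadical.exists_sub_C_mul_det_mem (hrad : VarsMemRadical f)
    {Φ : Matrix (Fin 3) (Fin 3) (MvPolynomial (Fin 3) k)} (hΦ : f = X ᵥ* Φ)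
    {u : MvPolynomial (Fin 3) k} (hu : ∀ j, X j * u ∈ Ideal.span (Set.range f)) :
    ∃ c, u - C c * Φ.det ∈ Ideal.span (Set.range f) := by
  choose m hm using fun j => mem_span_range_iff_dotProduct.1 (hu j)
  obtain ⟨n, s, hns⟩ := hrad.koszulExact.exists_eq_dotProduct_sub_of_socle
    varsMemRadical_X.koszulExact hΦ fun j => (hm j).symm
  have hdet : idealOfVars (Fin 3) k ≤ (Ideal.span (Set.range f)).colon {Φ.det} := by
    rw [Ideal.span_le]
    rintro _ ⟨j, rfl⟩
    rw [SetLike.mem_coe, Submodule.mem_colon_singleton]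
    have hcramer : f ᵥ* Φ.adjugate = Φ.det • X := by
      rw [hΦ, vecMul_vecMul, mul_adjugate, vecMul_smul, vecMul_one]
    refine mem_span_range_iff_dotProduct.2 ⟨fun l => Φ.adjugate l j, ?_⟩
    rw [dotProduct_comm, smul_eq_mul, mul_comm]
    exact congrFun hcramer j
  have hs : s - C (coeff 0 s) ∈ idealOfVars (Fin 3) k := by
    rw [← pow_one (idealOfVars _ _), mem_pow_idealOfVars_iff']
    intro m hm
    simp [(Finsupp.degree_eq_zero_iff m).1 (Nat.lt_one_iff.1 hm)]
  refine ⟨-coeff 0 s, ?_⟩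
  have hmem := Submodule.mem_colon_singleton.1 (hdet hs)
  have hn : n ⬝ᵥ f ∈ Ideal.span (Set.range f) := mem_span_range_iff_dotProduct.2 ⟨n, rfl⟩
  convert sub_mem hn hmem using 1
  rw [hns, map_neg, smul_eq_mul]
  ring

theorem VarsMemRadical.exists_socle_generator [CharZero k] {e : ℕ}
    (hrad : VarsMemRadical f) (hf : ∀ i, (f i).IsHomogeneous (e + 1)) :
    ∃ Δ : MvPolynomial (Fin 3) k, Δ.IsHomogeneous (3 * e) ∧
      ∀ u, (∀ j, X j * u ∈ Ideal.span (Set.range f)) →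
        ∃ c, u - C c * Δ ∈ Ideal.span (Set.range f) := by
  -- Euler's relation expresses `f` through `X` by the matrix of the partial derivatives.
  let Φ : Matrix (Fin 3) (Fin 3) (MvPolynomial (Fin 3) k) :=
    .of fun i l => C ((e + 1 : k)⁻¹) * pderiv i (f l)
  have hΦ : f = X ᵥ* Φ := by
    ext1 l
    have hne : (e + 1 : k) ≠ 0 := Nat.cast_add_one_ne_zero e
    have heuler := (hf l).sum_X_mul_pderiv
    rw [nsmul_eq_mul, ← map_natCast C, Nat.cast_succ] at heuler
    calc f l = C ((e + 1 : k)⁻¹) * ∑ i, X i * pderiv i (f l) := by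
          rw [heuler, ← mul_assoc, ← C_mul, inv_mul_cancel₀ hne, C_1, one_mul]
      _ = (X ᵥ* Φ) l := by
          simp only [vecMul, dotProduct, Φ, Matrix.of_apply, Finset.mul_sum]
          exact Finset.sum_congr rfl fun i _ => by ring
  refine ⟨Φ.det, ?_, fun u => hrad.exists_sub_C_mul_det_mem hΦ⟩
  rw [det_apply]
  refine IsHomogeneous.sum _ _ _ fun σ _ => ?_
  have hprod : (∏ i, Φ (σ i) i).IsHomogeneous (∑ _i : Fin 3, e) :=
    IsHomogeneous.prod _ _ _ fun i _ => (hf i).pderiv.C_mul _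
  rw [Finset.sum_const, Finset.card_univ, Fintype.card_fin, smul_eq_mul] at hprod
  rcases Int.units_eq_one_or (Equiv.Perm.sign σ) with h | h <;> simp [h, hprod, hprod.neg]

variable [CharZero k] {e : ℕ}

theorem VarsMemRadical.mem_of_X_mul_mem (hrad : VarsMemRadical f)
    (hf : ∀ i, (f i).IsHomogeneous (e + 1)) {d : ℕ} (hd : d ≠ 3 * e)
    {u : MvPolynomial (Fin 3) k} (hu : u.IsHomogeneous d)
    (hX : ∀ j, X j * u ∈ Ideal.span (Set.range f)) : u ∈ Ideal.span (Set.range f) := by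
  obtain ⟨Δ, hΔ, hsocle⟩ := hrad.exists_socle_generator hf
  obtain ⟨c, hc⟩ := hsocle u hX
  have := homogeneousComponent_mem_span hf hc d
  rwa [map_sub, homogeneousComponent_C_mul, homogeneousComponent_of_mem hu,
    homogeneousComponent_of_mem hΔ, if_pos rfl, if_neg hd, mul_zero, sub_zero] at this

theorem VarsMemRadical.mem_of_isHomogeneous_of_lt (hrad : VarsMemRadical f)
    (hf : ∀ i, (f i).IsHomogeneous (e + 1)) {d : ℕ} (hd : 3 * e < d)
    {u : MvPolynomial (Fin 3) k} (hu : u.IsHomogeneous d) : u ∈ Ideal.span (Set.range f) := by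
  obtain ⟨N, hN⟩ := Ideal.exists_pow_le_of_le_radical_of_fg
    (Ideal.span_le.2 (Set.range_subset_iff.2 hrad)) (idealOfVars_fg (Fin 3) k)
  rcases le_total N d with hNd | hNd
  · exact hN (Ideal.pow_le_pow_right hNd (mem_pow_idealOfVars_of_isHomogeneous hu))
  induction hNd using Nat.decreasingInduction generalizing u with
  | self => exact hN (mem_pow_idealOfVars_of_isHomogeneous hu)
  | of_succ d _ ih =>
    refine hrad.mem_of_X_mul_mem hf hd.ne' hu fun j => ih (hd.trans d.lt_succ_self) ?_
    rw [add_comm]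
    exact (isHomogeneous_X _ _).mul hu

theorem VarsMemRadical.mem_of_forall_mul_mem (hrad : VarsMemRadical f)
    (hf : ∀ i, (f i).IsHomogeneous (e + 1)) {d d' : ℕ} (hd : d + d' = 3 * e)
    {u : MvPolynomial (Fin 3) k} (hu : u.IsHomogeneous d)
    (h : ∀ v : MvPolynomial (Fin 3) k, v.IsHomogeneous d' → u * v ∈ Ideal.span (Set.range f)) :
    u ∈ Ideal.span (Set.range f) := by
  induction d' generalizing d u with
  | zero => simpa using h 1 (isHomogeneous_one _ _)
  | succ d' ih =>
    refine hrad.mem_of_X_mul_mem hf (by omega) hu fun j =>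
      ih (d := 1 + d) (by omega) ((isHomogeneous_X _ _).mul hu) fun v hv => ?_
    rw [mul_comm (X j), mul_assoc]
    exact h _ (by rw [add_comm]; exact (isHomogeneous_X _ _).mul hv)

/-- `φ` is a dual socle generator of `R ⧸ J` in degree `T`: a functional on `R` vanishing on `J`
but not on all forms of degree `T`. -/
structure IsDualSocleGenerator {σ k : Type*} [CommRing k] (J : Ideal (MvPolynomial σ k)) (T : ℕ)
    (φ : MvPolynomial σ k →ₗ[k] k) : Prop where
  apply_eq_zero : ∀ p ∈ J, φ p = 0
  exists_ne_zero : ∃ p, p.IsHomogeneous T ∧ φ p ≠ 0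

theorem VarsMemRadical.exists_isDualSocleGenerator (hrad : VarsMemRadical f)
    (hf : ∀ i, (f i).IsHomogeneous (e + 1)) :
    ∃ φ, IsDualSocleGenerator (Ideal.span (Set.range f)) (3 * e) φ := by
  obtain ⟨p, hp, hpJ⟩ : ∃ p : MvPolynomial (Fin 3) k, p.IsHomogeneous (3 * e) ∧
      p ∉ Ideal.span (Set.range f) := by
    by_contra! h
    have hone := hrad.mem_of_forall_mul_mem hf (zero_add _) (isHomogeneous_one _ _)
      fun v hv => by simpa using h v hv
    exact one_ne_zero <|
      eq_zero_of_mem_pow_idealOfVars (span_le_pow_idealOfVars hf hone) (by simp)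
  obtain ⟨φ, hφp, hφ⟩ := Submodule.exists_le_ker_of_notMem
    (p := (Ideal.span (Set.range f)).restrictScalars k) hpJ
  exact ⟨φ, fun q hq => hφ hq, p, hp, hφp⟩

theorem IsDualSocleGenerator.mem_of_forall_apply_mul_eq_zero {φ : MvPolynomial (Fin 3) k →ₗ[k] k}
    (hφ : IsDualSocleGenerator (Ideal.span (Set.range f)) (3 * e) φ) (hrad : VarsMemRadical f)
    (hf : ∀ i, (f i).IsHomogeneous (e + 1)) {d d' : ℕ} (hd : d + d' = 3 * e)
    {u : MvPolynomial (Fin 3) k} (hu : u.IsHomogeneous d)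
    (h : ∀ v : MvPolynomial (Fin 3) k, v.IsHomogeneous d' → φ (u * v) = 0) :
    u ∈ Ideal.span (Set.range f) := by
  obtain ⟨Δ, -, hsocle⟩ := hrad.exists_socle_generator hf
  have htop {p : MvPolynomial (Fin 3) k} (hp : p.IsHomogeneous (3 * e)) :
      ∃ c, p - C c * Δ ∈ Ideal.span (Set.range f) :=
    hsocle p fun j => hrad.mem_of_isHomogeneous_of_lt hf (by omega) ((isHomogeneous_X _ j).mul hp)
  have happly {p c} (hc : p - C c * Δ ∈ Ideal.span (Set.range f)) : φ p = c * φ Δ := by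
    have := hφ.apply_eq_zero _ hc
    rwa [map_sub, C_mul', map_smul, smul_eq_mul, sub_eq_zero] at this
  obtain ⟨p, hp, hφp⟩ := hφ.exists_ne_zero
  obtain ⟨b, hb⟩ := htop hp
  have hΔ : φ Δ ≠ 0 := right_ne_zero_of_mul (happly hb ▸ hφp)
  refine hrad.mem_of_forall_mul_mem hf hd hu fun v hv => ?_
  obtain ⟨c, hc⟩ := htop (hd ▸ hu.mul hv)
  have hc0 : c = 0 := (mul_eq_zero.1 ((happly hc).symm.trans (h v hv))).resolve_right hΔ
  simpa [hc0] using hc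

end Duality

/-! ### Extension of the coefficients -/

section CoeffDerivation

variable {R A σ : Type*} [CommRing R] [CommRing A] [Algebra R A]

/-- The derivation of `A[σ]` that applies a derivation of `A` to every coefficient. -/
noncomputable def coeffDerivation (d : Derivation R A A) :
    Derivation R (MvPolynomial σ A) (MvPolynomial σ A) :=
  let coeffs := AddMonoidAlgebra.coeffLinearEquiv (M := σ →₀ ℕ) (S := A) R
  .mk' (coeffs.symm.toLinearMap ∘ₗ Finsupp.mapRange.linearMap d.toLinearMap ∘ₗ coeffs.toLinearMap)
    fun p q => by
      classical
      ext m
      have hcoeff (p : MvPolynomial σ A) : coeff m ((coeffs.symm.toLinearMap ∘ₗ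
        Finsupp.mapRange.linearMap d.toLinearMap ∘ₗ coeffs.toLinearMap) p) = d (coeff m p) := rfl
      simp only [hcoeff, coeff_mul, coeff_add, smul_eq_mul, map_sum, Derivation.leibniz,
        Finset.sum_add_distrib, mul_comm q]
      congr 1
      exact Finset.sum_congr rfl fun x _ => mul_comm _ _

variable (d : Derivation R A A)

theorem coeff_coeffDerivation (p : MvPolynomial σ A) (m : σ →₀ ℕ) :
    coeff m (coeffDerivation d p) = d (coeff m p) := rfl

theorem coeffDerivation_monomial (m : σ →₀ ℕ) (a : A) :
    coeffDerivation d (monomial m a) = monomial m (d a) := by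
  classical
  ext m'
  rw [coeff_coeffDerivation, coeff_monomial, coeff_monomial]
  split_ifs <;> simp

@[simp]
theorem coeffDerivation_C (a : A) : coeffDerivation d (C a : MvPolynomial σ A) = C (d a) :=
  coeffDerivation_monomial d 0 a

@[simp]
theorem coeffDerivation_map_algebraMap (p : MvPolynomial σ R) :
    coeffDerivation d (map (algebraMap R A) p) = 0 := by
  ext m
  rw [coeff_coeffDerivation, coeff_map, d.map_algebraMap, coeff_zero]

@[simp]
theorem coeffDerivation_X (i : σ) : coeffDerivation d (X i : MvPolynomial σ A) = 0 := by
  rw [← map_X (algebraMap R A), coeffDerivation_map_algebraMap]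

end CoeffDerivation

section ExtendScalars

variable {k A B σ : Type*} [CommRing k] [CommRing A] [CommRing B] [Algebra k A] [Algebra k B]
  (φ : MvPolynomial σ k →ₗ[k] k)

variable (A) in
/-- The functional on `A[σ]` that agrees on monomials with a given functional on `k[σ]`. -/
noncomputable def extendScalars : MvPolynomial σ A →ₗ[A] A :=
  (basisMonomials σ A).constr A fun m => algebraMap k A (φ (monomial m 1))

theorem extendScalars_monomial (m : σ →₀ ℕ) (a : A) :
    extendScalars A φ (monomial m a) = a * algebraMap k A (φ (monomial m 1)) := by
  have hbasis : extendScalars A φ (monomial m 1) = algebraMap k A (φ (monomial m 1)) := by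
    simpa [extendScalars] using
      (basisMonomials σ A).constr_basis A (fun m => algebraMap k A (φ (monomial m 1))) m
  rw [← hbasis, ← smul_eq_mul, ← map_smul, smul_monomial, smul_eq_mul, mul_one]

theorem extendScalars_map (p : MvPolynomial σ k) :
    extendScalars A φ (map (algebraMap k A) p) = algebraMap k A (φ p) := by
  induction p using MvPolynomial.induction_on' with
  | monomial m c =>
    rw [map_monomial, extendScalars_monomial, ← map_mul, ← smul_eq_mul, ← map_smul, smul_monomial,
      smul_eq_mul, mul_one]
  | add p q hp hq => simp only [map_add, hp, hq]

theorem map_extendScalars (g : A →ₐ[k] B) (p : MvPolynomial σ A) :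
    g (extendScalars A φ p) = extendScalars B φ (map g p) := by
  induction p using MvPolynomial.induction_on' with
  | monomial m a => simp [map_monomial, extendScalars_monomial]
  | add p q hp hq => simp only [map_add, hp, hq]

theorem extendScalars_self : extendScalars k φ = φ :=
  LinearMap.ext fun p => by simpa [MvPolynomial.map_id] using extendScalars_map (A := k) φ p

theorem derivation_extendScalars (d : Derivation k A A) (p : MvPolynomial σ A) :
    d (extendScalars A φ p) = extendScalars A φ (coeffDerivation d p) := by
  induction p using MvPolynomial.induction_on' with
  | monomial m a => simp [coeffDerivation_monomial, extendScalars_monomial, mul_comm]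
  | add p q hp hq => simp only [map_add, hp, hq]

end ExtendScalars

/-! ### Pairings on forms -/

section FormPairing

variable {k A B σ : Type*} [CommRing k] [CommRing A] [CommRing B]

variable (A σ) in
/-- The basis of monomials of the space of forms of degree `i`. -/
noncomputable def homogeneousBasis (i : ℕ) :
    Basis {m : σ →₀ ℕ | m.degree = i} A (homogeneousSubmodule σ A i) :=
  (basisRestrictSupport A _).map
    (LinearEquiv.ofEq _ _ (homogeneousSubmodule_eq_finsupp_supported σ A i).symm)

theorem coe_homogeneousBasis {i : ℕ} (m : {m : σ →₀ ℕ | m.degree = i}) :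
    (homogeneousBasis A σ i m : MvPolynomial σ A) = monomial m.1 1 := by
  have hm : (monomial m.1 1 : MvPolynomial σ A) ∈ homogeneousSubmodule σ A i :=
    isHomogeneous_monomial 1 m.2
  suffices homogeneousBasis A σ i m = ⟨monomial m.1 1, hm⟩ from congrArg Subtype.val this
  classical
  refine (homogeneousBasis A σ i).apply_eq_iff.2 (Finsupp.ext fun m' => ?_)
  change coeff m'.1 (monomial m.1 1) = _
  simp [coeff_monomial, Finsupp.single_apply, Subtype.ext_iff]

/-- The pairing `(q, p) ↦ ψ (M q p)` on forms of degree `i`. -/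
noncomputable def formPairing (ψ : MvPolynomial σ A →ₗ[A] A) (M : MvPolynomial σ A) (i : ℕ) :
    LinearMap.BilinForm A (homogeneousSubmodule σ A i) :=
  ((LinearMap.mul A (MvPolynomial σ A)).compr₂ (ψ ∘ₗ LinearMap.mulLeft A M)).domRestrict₁₂ _ _

theorem formPairing_apply (ψ : MvPolynomial σ A →ₗ[A] A) (M : MvPolynomial σ A) {i : ℕ}
    (q p : homogeneousSubmodule σ A i) : formPairing ψ M i q p = ψ (M * (q * p)) := rfl

theorem formPairing_nondegenerate_iff {ψ : MvPolynomial σ A →ₗ[A] A} {M : MvPolynomial σ A}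
    {i : ℕ} : (formPairing ψ M i).Nondegenerate ↔ ∀ q : MvPolynomial σ A, q.IsHomogeneous i →
      (∀ p : MvPolynomial σ A, p.IsHomogeneous i → ψ (M * (q * p)) = 0) → q = 0 := by
  have hsymm : (formPairing ψ M i).IsSymm :=
    ⟨fun q p => by simp only [formPairing_apply, mul_comm]⟩
  rw [LinearMap.BilinForm.Nondegenerate, hsymm.isRefl.nondegenerate_iff_separatingLeft]
  exact ⟨fun h q hq hp => congrArg Subtype.val (h ⟨q, hq⟩ fun p => hp p.1 p.2),
    fun h q hq => Subtype.ext (h q q.2 fun p hp => hq ⟨p, hp⟩)⟩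

variable [Algebra k A] [Algebra k B] [IsDomain A] [IsDomain B] [Finite σ]

theorem formPairing_nondegenerate_of_map (φ : MvPolynomial σ k →ₗ[k] k)
    {M : MvPolynomial σ A} {i : ℕ}
    (h : (formPairing (extendScalars A φ) M i).Nondegenerate) :
    ∃ D : A, D ≠ 0 ∧ ∀ g : A →ₐ[k] B, g D ≠ 0 →
      (formPairing (extendScalars B φ) (map g M) i).Nondegenerate := by
  classical
  let := (Finsupp.finite_of_degree_eq (σ := σ) i).fintype
  have hmap (g : A →ₐ[k] B) : (LinearMap.BilinForm.toMatrix (homogeneousBasis A σ i)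
      (formPairing (extendScalars A φ) M i)).map g =
      LinearMap.BilinForm.toMatrix (homogeneousBasis B σ i)
        (formPairing (extendScalars B φ) (map g M) i) := by
    ext m m'
    simp [LinearMap.BilinForm.toMatrix_apply, formPairing_apply, map_extendScalars,
      coe_homogeneousBasis]
  refine ⟨_, (LinearMap.BilinForm.nondegenerate_iff_det_ne_zero (homogeneousBasis A σ i)).1 h,
    fun g hg => LinearMap.BilinForm.nondegenerate_of_det_ne_zero _ (homogeneousBasis B σ i) ?_⟩
  rwa [← hmap, ← AlgHom.mapMatrix_apply, ← AlgHom.map_det]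

end FormPairing

section Lefschetz

theorem IsDualSocleGenerator.extendScalars {k A σ ι : Type*} [CommRing k] [CommRing A]
    [Algebra k A] [FaithfulSMul k A] {f : ι → MvPolynomial σ k} {T : ℕ}
    {φ : MvPolynomial σ k →ₗ[k] k} (hφ : IsDualSocleGenerator (Ideal.span (Set.range f)) T φ) :
    IsDualSocleGenerator (Ideal.span (Set.range fun i => map (algebraMap k A) (f i))) T
      (extendScalars A φ) where
  apply_eq_zero p hp := by
    have hmul (i : ι) (q : MvPolynomial σ A) :
        _root_.extendScalars A φ (q * map (algebraMap k A) (f i)) = 0 := by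
      induction q using MvPolynomial.induction_on' with
      | monomial m a =>
        have hm : monomial m a = a • map (algebraMap k A) (monomial m 1) := by
          rw [map_monomial, smul_monomial, map_one, smul_eq_mul, mul_one]
        rw [hm, smul_mul_assoc, ← map_mul, map_smul, extendScalars_map,
          hφ.apply_eq_zero _ (Ideal.mul_mem_left _ _ (Ideal.subset_span ⟨i, rfl⟩)), map_zero,
          smul_zero]
      | add q r hq hr => rw [add_mul, map_add, hq, hr, add_zero]
    suffices ∀ q, _root_.extendScalars A φ (q * p) = 0 by simpa using this 1
    induction hp using Submodule.span_induction with
    | mem p hp =>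
      obtain ⟨i, rfl⟩ := hp
      exact hmul i
    | zero => simp
    | add p p' _ _ hp hp' => simp [mul_add, hp, hp']
    | smul a p _ hp => simpa [mul_assoc] using fun q => hp (q * a)
  exists_ne_zero := by
    obtain ⟨p, hp, hφp⟩ := hφ.exists_ne_zero
    refine ⟨map (algebraMap k A) p, hp.map _, ?_⟩
    rwa [extendScalars_map, Ne, FaithfulSMul.algebraMap_eq_zero_iff]

theorem hasSLPQuot_of_bijective {N T : ℕ} {I : Ideal (MvPolynomial (Fin N) ℂ)}
    {L : MvPolynomial (Fin N) ℂ} (hL : L.IsHomogeneous 1)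
    (hinj : ∀ i, 2 * i < T → ∀ q : MvPolynomial (Fin N) ℂ, q.IsHomogeneous i →
      L ^ (T - 2 * i) * q ∈ I → q ∈ I)
    (hsurj : ∀ i, 2 * i < T → ∀ p : MvPolynomial (Fin N) ℂ, p.IsHomogeneous (T - i) →
      ∃ q : MvPolynomial (Fin N) ℂ, q.IsHomogeneous i ∧ p - L ^ (T - 2 * i) * q ∈ I) :
    hasSLPQuot I T := by
  refine ⟨L, hL, fun i k hik => ?_⟩
  rcases Nat.eq_zero_or_pos k with rfl | hk
  · exact .inl fun v _ hv => by rwa [pow_zero, one_mul] at hv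
  by_cases hle : i + (i + k) ≤ T
  · left
    rintro _ ⟨q, hq, rfl⟩ hv
    refine Ideal.Quotient.eq_zero_iff_mem.2 (hinj i (by omega) q hq ?_)
    rw [show T - 2 * i = (T - 2 * i - k) + k by omega, pow_add, mul_assoc]
    refine Ideal.mul_mem_left _ _ (Ideal.Quotient.eq_zero_iff_mem.1 ?_)
    rwa [map_mul, map_pow]
  · right
    rintro _ ⟨p, hp, rfl⟩
    obtain ⟨q, hq, hpq⟩ := hsurj (T - (i + k)) (by omega) p (by rwa [Nat.sub_sub_self hik])
    obtain ⟨t, ht⟩ : ∃ t, T - 2 * (T - (i + k)) = k + t :=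
      ⟨T - 2 * (T - (i + k)) - k, by omega⟩
    refine ⟨Ideal.Quotient.mk I (L ^ t * q), ⟨L ^ t * q, ?_, rfl⟩, ?_⟩
    · have := (hL.pow t).mul hq
      rwa [show 1 * t + (T - (i + k)) = i by omega] at this
    · rw [ht, pow_add, mul_assoc] at hpq
      rw [← map_pow, ← map_mul]
      exact (Ideal.Quotient.eq.2 hpq).symm

theorem IsDualSocleGenerator.exists_sub_mul_mem {k : Type*} [Field k] [CharZero k]
    {f : Fin 3 → MvPolynomial (Fin 3) k} {e : ℕ} {φ : MvPolynomial (Fin 3) k →ₗ[k] k}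
    (hφ : IsDualSocleGenerator (Ideal.span (Set.range f)) (3 * e) φ) (hrad : VarsMemRadical f)
    (hf : ∀ i, (f i).IsHomogeneous (e + 1)) {M : MvPolynomial (Fin 3) k} {d i : ℕ}
    (hM : M.IsHomogeneous d) (hd : d + i + i = 3 * e) (h : (formPairing φ M i).Nondegenerate)
    {p : MvPolynomial (Fin 3) k} (hp : p.IsHomogeneous (d + i)) :
    ∃ q : MvPolynomial (Fin 3) k, q.IsHomogeneous i ∧ p - M * q ∈ Ideal.span (Set.range f) := by
  have : Module.Finite k (homogeneousSubmodule (Fin 3) k i) :=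
    Module.Finite.of_fg (homogeneousSubmodule_fg (σ := Fin 3) (R := k) i)
  let q := ((formPairing φ M i).toDual h).symm ((φ ∘ₗ LinearMap.mulLeft k p).domRestrict _)
  refine ⟨q, q.2,
    hφ.mem_of_forall_apply_mul_eq_zero hrad hf hd (hp.sub (hM.mul q.2)) fun v hv => ?_⟩
  have hqv : φ (M * (q * v)) = φ (p * v) :=
    LinearMap.BilinForm.apply_toDual_symm_apply (hB := h) _ ⟨v, hv⟩
  rw [sub_mul, map_sub, mul_assoc, hqv, sub_self]

theorem hasSLPQuot_of_nondegenerate {f : Fin 3 → MvPolynomial (Fin 3) ℂ} {e : ℕ}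
    {φ : MvPolynomial (Fin 3) ℂ →ₗ[ℂ] ℂ}
    (hφ : IsDualSocleGenerator (Ideal.span (Set.range f)) (3 * e) φ) (hrad : VarsMemRadical f)
    (hf : ∀ i, (f i).IsHomogeneous (e + 1)) {L : MvPolynomial (Fin 3) ℂ} (hL : L.IsHomogeneous 1)
    (h : ∀ i, 2 * i < 3 * e → (formPairing φ (L ^ (3 * e - 2 * i)) i).Nondegenerate) :
    hasSLPQuot (Ideal.span (Set.range f)) (3 * e) := by
  refine hasSLPQuot_of_bijective hL (fun i hi q hq hqJ => ?_) fun i hi p hp => ?_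
  · convert zero_mem (Ideal.span (Set.range f))
    refine formPairing_nondegenerate_iff.1 (h i hi) q hq fun v _ => hφ.apply_eq_zero _ ?_
    rw [← mul_assoc]
    exact Ideal.mul_mem_right _ _ hqJ
  · refine hφ.exists_sub_mul_mem hrad hf (d := 3 * e - 2 * i) ?_ (by omega) (h i hi) ?_
    · simpa using hL.pow (3 * e - 2 * i)
    · rwa [show 3 * e - 2 * i + i = 3 * e - i by omega]

end Lefschetz

/-! ### Hyperplanes in a parameter family -/

section Hyperplane

variable {n : ℕ} {A B k : Type*} [CommRing A] [CommRing B]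

/-- The linear form `x_n - ∑ c_j x_j`, cutting out a hyperplane transverse to the last coordinate
axis. -/
noncomputable def hyperplane (c : Fin n → A) : MvPolynomial (Fin (n + 1)) A :=
  X (Fin.last n) - ∑ j, C (c j) * X j.castSucc

theorem isHomogeneous_hyperplane (c : Fin n → A) : (hyperplane c).IsHomogeneous 1 :=
  (isHomogeneous_X A _).sub (.sum _ _ _ fun _ _ => (isHomogeneous_X A _).C_mul _)

theorem map_hyperplane (g : A →+* B) (c : Fin n → A) :
    map g (hyperplane c) = hyperplane (g ∘ c) := by
  simp [hyperplane]

theorem hyperplane_ne_zero [Nontrivial A] (c : Fin n → A) : hyperplane c ≠ 0 := by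
  intro h
  have := congrArg (eval (Fin.snoc 0 1)) h
  simp [hyperplane] at this

/-- Restriction of polynomials to the hyperplane `hyperplane c`, parametrised by the coordinates
other than the last one. -/
noncomputable def restrict (c : Fin n → A) :
    MvPolynomial (Fin (n + 1)) A →ₐ[A] MvPolynomial (Fin n) A :=
  aeval (Fin.snoc X (∑ j, C (c j) * X j))

@[simp]
theorem restrict_X_castSucc (c : Fin n → A) (j : Fin n) : restrict c (X j.castSucc) = X j := by
  simp [restrict]

theorem restrict_X_last (c : Fin n → A) :
    restrict c (X (Fin.last n)) = ∑ j, C (c j) * X j := by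
  simp [restrict]

@[simp]
theorem restrict_hyperplane (c : Fin n → A) : restrict c (hyperplane c) = 0 := by
  simp [hyperplane, restrict_X_last]

theorem isHomogeneous_restrict (c : Fin n → A) {p : MvPolynomial (Fin (n + 1)) A} {d : ℕ}
    (hp : p.IsHomogeneous d) : (restrict c p).IsHomogeneous d := by
  rw [← one_mul d]
  refine hp.aeval _ fun j => ?_
  refine Fin.lastCases ?_ (fun j => ?_) j
  · simpa using IsHomogeneous.sum _ _ _ fun i _ => (isHomogeneous_X A i).C_mul (c i)
  · simpa using isHomogeneous_X A j

theorem hyperplane_dvd_of_restrict_eq_zero {c : Fin n → A} {p : MvPolynomial (Fin (n + 1)) A}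
    (hp : restrict c p = 0) : hyperplane c ∣ p := by
  let π := Ideal.Quotient.mkₐ A (Ideal.span {hyperplane c})
  have hπ : (π.comp (rename Fin.castSucc)).comp (restrict c) = π := by
    refine algHom_ext fun j => Fin.lastCases ?_ (fun j => ?_) j
    · refine (sub_eq_zero.1 ?_).symm
      rw [AlgHom.comp_apply, AlgHom.comp_apply, ← map_sub, restrict_X_last]
      refine Ideal.Quotient.eq_zero_iff_mem.2 (Ideal.mem_span_singleton.2 (dvd_of_eq ?_))
      simp [hyperplane]
    · simp
  rw [← Ideal.mem_span_singleton, ← Ideal.Quotient.eq_zero_iff_mem]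
  have := DFunLike.congr_fun hπ p
  rw [AlgHom.comp_apply, hp, map_zero] at this
  exact this.symm

theorem coeffDerivation_hyperplane [CommRing k] [Algebra k A] {d : Derivation k A A}
    {c : Fin n → A} {i : Fin n} (hd : ∀ j, d (c j) = if i = j then 1 else 0) :
    coeffDerivation d (hyperplane c) = -X i.castSucc := by
  simp [hyperplane, Derivation.leibniz, hd]

end Hyperplane

/-! ### The generic line -/

section LowDegree

variable {σ k : Type*} [Field k] {d : ℕ}

theorem VarsMemRadical.eq_zero_of_cross_eq_zero {f v : Fin 3 → MvPolynomial σ k}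
    (hrad : VarsMemRadical f) (hf : ∀ l, (f l).IsHomogeneous d) {i j : σ} (hij : i ≠ j)
    (hv : f ⨯₃ v = 0) (hd : ∀ l, (v l).totalDegree < d) : v = 0 := by
  obtain ⟨u, rfl⟩ := hrad.exists_eq_smul hij hv
  ext1 l
  refine eq_zero_of_mem_pow_idealOfVars ?_ (hd l)
  rw [Pi.smul_apply, smul_eq_mul]
  exact Ideal.mul_mem_left _ _ (mem_pow_idealOfVars_of_isHomogeneous (hf l))

theorem VarsMemRadical.eq_zero_of_dotProduct_eq_zero {f w : Fin 3 → MvPolynomial (Fin 3) k}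
    (hrad : VarsMemRadical f) (hf : ∀ l, (f l).IsHomogeneous d) (hw : f ⬝ᵥ w = 0)
    (hd : ∀ l, (w l).totalDegree < d) : w = 0 := by
  have hmem (l) : f l ∈ idealOfVars (Fin 3) k ^ d := mem_pow_idealOfVars_of_isHomogeneous (hf l)
  obtain ⟨u, rfl⟩ := hrad.koszulExact.exists_eq_cross w hw
  have hcross (i j) : f i * u j - f j * u i ∈ idealOfVars (Fin 3) k ^ d :=
    sub_mem (Ideal.mul_mem_right _ _ (hmem i)) (Ideal.mul_mem_right _ _ (hmem j))
  ext1 l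
  refine eq_zero_of_mem_pow_idealOfVars ?_ (hd l)
  rw [cross_apply]
  fin_cases l
  exacts [hcross 1 2, hcross 2 0, hcross 0 1]

end LowDegree

section LinearCombination

open Fintype (linearCombination)

variable {ι σ τ k K : Type*} [Fintype ι] [CommRing k] [CommRing K] [Algebra k K]

theorem linearCombination_eq_dotProduct (f : ι → MvPolynomial σ K) (w : ι → K) :
    linearCombination K f w = (fun l => C (w l)) ⬝ᵥ f := by
  simp [Fintype.linearCombination_apply, dotProduct, smul_eq_C_mul]

theorem algHom_linearCombination (g : MvPolynomial σ K →ₐ[K] MvPolynomial τ K)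
    (f : ι → MvPolynomial σ K) (w : ι → K) :
    g (linearCombination K f w) = linearCombination K (fun l => g (f l)) w := by
  simp [Fintype.linearCombination_apply]

theorem coeffDerivation_linearCombination {d : Derivation k K K} {f : ι → MvPolynomial σ K}
    (hf : ∀ l, coeffDerivation d (f l) = 0) (w : ι → K) :
    coeffDerivation d (linearCombination K f w) = linearCombination K f fun l => d (w l) := by
  simp [linearCombination_eq_dotProduct, dotProduct, hf, mul_comm]

end LinearCombination

/-- Elements `coord j` of the field `K`, thought of as independent parameters, together with
commuting derivations `deriv j` of `K` over `k` that act on them as the partial derivatives. -/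
structure ParameterFrame (k K : Type*) [Field k] [Field K] [Algebra k K] (n : ℕ) where
  coord : Fin n → K
  deriv : Fin n → Derivation k K K
  deriv_coord : ∀ i j, deriv i (coord j) = if i = j then 1 else 0
  deriv_comm : ∀ i j x, deriv i (deriv j x) = deriv j (deriv i x)

namespace ParameterFrame

open Fintype (linearCombination)

variable {k K : Type*} [Field k] [Field K] [Algebra k K]

theorem coeffDerivation_hyperplane {n : ℕ} (P : ParameterFrame k K n) (i : Fin n) :
    coeffDerivation (P.deriv i) (hyperplane P.coord) = -X i.castSucc :=
  _root_.coeffDerivation_hyperplane (P.deriv_coord i)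

-- Differentiating `p = L ^ (m + 1) * r` shows that `L` divides `r` as well.
theorem eq_zero_of_hyperplane_dvd [CharZero K] {n : ℕ} (P : ParameterFrame k K n) (i : Fin n)
    {p : MvPolynomial (Fin (n + 1)) K} {c : K} (hdvd : hyperplane P.coord ∣ p)
    (hp : coeffDerivation (P.deriv i) p = C c * p) : p = 0 := by
  by_contra hp0
  have hunit : ¬IsUnit (hyperplane P.coord) := fun h => by
    simpa using h.map (restrict P.coord)
  obtain ⟨r, hr, hrL⟩ := (FiniteMultiplicity.of_not_isUnit hunit hp0).exists_eq_pow_mul_and_not_dvd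
  obtain ⟨m, hm⟩ : ∃ m, multiplicity (hyperplane P.coord) p = m + 1 :=
    Nat.exists_eq_succ_of_ne_zero (multiplicity_ne_zero.2 hdvd)
  rw [hm] at hr
  have hdescent : (m + 1 : MvPolynomial (Fin (n + 1)) K) * X i.castSucc * r =
      hyperplane P.coord * (coeffDerivation (P.deriv i) r - C c * r) := by
    refine mul_left_cancel₀ (pow_ne_zero m (hyperplane_ne_zero P.coord)) ?_
    rw [hr, Derivation.leibniz, Derivation.leibniz_pow, P.coeffDerivation_hyperplane] at hp
    simp only [smul_eq_mul, nsmul_eq_mul, Nat.cast_add, Nat.cast_one, Nat.add_sub_cancel] at hp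
    linear_combination -hp
  have := congrArg (restrict P.coord) hdescent
  simp only [map_mul, map_add, map_natCast, map_one, restrict_X_castSucc, restrict_hyperplane,
    zero_mul, mul_eq_zero, X_ne_zero, Nat.cast_add_one_ne_zero, false_or] at this
  exact hrL (hyperplane_dvd_of_restrict_eq_zero this)

end ParameterFrame

section CrossProduct

variable {K : Type*} [Field K]

theorem exists_smul_eq_of_cross_eq_zero {v w : Fin 3 → K} (hv : v ≠ 0) (h : v ⨯₃ w = 0) :
    ∃ c : K, c • v = w := by
  by_contra! hne
  exact crossProduct_ne_zero_iff_linearIndependent.2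
    ((LinearIndependent.pair_iff' hv).2 hne) h

theorem map_cross {R S : Type*} [CommRing R] [CommRing S] (g : R →+* S) (v w : Fin 3 → R) :
    (fun l => g ((v ⨯₃ w) l)) = (fun l => g (v l)) ⨯₃ fun l => g (w l) := by
  ext l
  fin_cases l <;> simp [cross_apply]

end CrossProduct

section LinearVector

open Fintype (linearCombination)

variable {ι K : Type*} [CommRing K] {n : ℕ}

/-- The vector of linear forms `∑ x_j B_j` with coefficient vectors `B_j`. -/
noncomputable def linearVector (B : Fin n → ι → K) (l : ι) : MvPolynomial (Fin n) K :=
  ∑ j, X j * C (B j l)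

theorem linearVector_eq_sum (B : Fin n → ι → K) :
    linearVector B = ∑ j, (X j : MvPolynomial (Fin n) K) • fun l => C (B j l) := by
  ext1 l
  simp [linearVector]

theorem isHomogeneous_linearVector (B : Fin n → ι → K) (l : ι) :
    (linearVector B l).IsHomogeneous 1 :=
  .sum _ _ _ fun j _ => (isHomogeneous_X K j).mul (isHomogeneous_C _ _)

theorem eval_linearVector (B : Fin n → ι → K) (s : Fin n → K) :
    (fun l => eval s (linearVector B l)) = ∑ j, s j • B j := by
  ext l
  simp [linearVector]

theorem sum_X_mul_linearCombination [Fintype ι] (B : Fin n → ι → K)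
    (f : ι → MvPolynomial (Fin n) K) :
    ∑ j, X j * linearCombination K f (B j) = f ⬝ᵥ linearVector B := by
  simp [linearVector_eq_sum, linearCombination_eq_dotProduct, dotProduct_sum, dotProduct_comm]

end LinearVector

namespace ParameterFrame

open Fintype (linearCombination)

variable {k K : Type*} [Field k] [Field K] [Algebra k K] (P : ParameterFrame k K 2)
  {f : Fin 3 → MvPolynomial (Fin 3) K} {d : ℕ}

theorem varsMemRadical_restrict (hrad : VarsMemRadical f) :
    VarsMemRadical fun l => restrict P.coord (f l) :=
  hrad.map (restrict P.coord).toRingHom fun j => ⟨j.castSucc, restrict_X_castSucc _ _⟩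

theorem eq_zero_of_cross_restrict_eq_zero (hrad : VarsMemRadical f)
    (hf : ∀ l, (f l).IsHomogeneous d) {v : Fin 3 → MvPolynomial (Fin 2) K}
    (hv : (fun l => restrict P.coord (f l)) ⨯₃ v = 0) (hd : ∀ l, (v l).totalDegree < d) : v = 0 :=
  (P.varsMemRadical_restrict hrad).eq_zero_of_cross_eq_zero
    (fun l => isHomogeneous_restrict _ (hf l)) (zero_ne_one (α := Fin 2)) hv hd

theorem cross_deriv_eq_zero (hrad : VarsMemRadical f)
    (hf : ∀ l, (f l).IsHomogeneous d) (hd : 1 < d)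
    (hconst : ∀ i l, coeffDerivation (P.deriv i) (f l) = 0) {w : Fin 3 → K}
    (hw : linearCombination K (fun l => restrict P.coord (f l)) w = 0) :
    (w ⨯₃ fun l => P.deriv 0 (w l)) = 0 := by
  obtain ⟨p, hp⟩ := hyperplane_dvd_of_restrict_eq_zero (c := P.coord)
    (p := linearCombination K f w) (by rw [algHom_linearCombination, hw])
  set h : Fin 3 → MvPolynomial (Fin 2) K := fun l => restrict P.coord (f l)
  set n : Fin 2 → Fin 3 → K := fun i => w ⨯₃ fun l => P.deriv i (w l)
  have hderiv (i : Fin 2) : linearCombination K h (fun l => P.deriv i (w l)) =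
      -X i * restrict P.coord p := by
    have := congrArg (fun q => restrict P.coord (coeffDerivation (P.deriv i) q)) hp
    simpa [coeffDerivation_linearCombination (hconst i), algHom_linearCombination,
      P.coeffDerivation_hyperplane, mul_comm] using this
  have hcross (i : Fin 2) : h ⨯₃ (fun l => C (n i l)) =
      -(X i * restrict P.coord p) • fun l => C (w l) := by
    rw [linearCombination_eq_dotProduct] at hw
    rw [map_cross, cross_cross_eq_smul_sub_smul', hw, zero_smul, sub_zero, dotProduct_comm,
      ← linearCombination_eq_dotProduct, hderiv, neg_mul]
  have hpar : linearVector ![-n 1, n 0] = 0 := by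
    refine P.eq_zero_of_cross_restrict_eq_zero hrad hf ?_ fun l =>
      (isHomogeneous_linearVector _ l).totalDegree_le.trans_lt hd
    rw [linearVector_eq_sum, Fin.sum_univ_two, map_add, map_smul, map_smul]
    simp only [cons_val_zero, cons_val_one, Pi.neg_apply, map_neg]
    rw [← Pi.neg_def, map_neg, hcross, hcross]
    module
  ext l
  simpa [linearVector] using congrArg (eval ![0, 1]) (congrFun hpar l)

theorem cross_eq_zero_of_linear_syzygies (hrad : VarsMemRadical f)
    (hf : ∀ l, (f l).IsHomogeneous d) (hd : 2 < d) {A B : Fin 2 → Fin 3 → K}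
    (hB : ∑ j, X j * linearCombination K (fun l => restrict P.coord (f l)) (B j) = 0)
    (hA : ∑ j, X j * linearCombination K (fun l => restrict P.coord (f l)) (A j) = 0)
    (s : Fin 2 → K) : (∑ j, s j • B j) ⨯₃ (∑ j, s j • A j) = 0 := by
  have hpar : linearVector B ⨯₃ linearVector A = 0 := by
    refine P.eq_zero_of_cross_restrict_eq_zero hrad hf ?_ fun l => ?_
    · rw [sum_X_mul_linearCombination] at hA hB
      rw [cross_cross_eq_smul_sub_smul', hA, dotProduct_comm, hB, zero_smul, zero_smul, sub_zero]
    · refine (IsHomogeneous.totalDegree_le (n := 2) ?_).trans_lt hd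
      have hmul (i j) : (linearVector B i * linearVector A j).IsHomogeneous 2 :=
        (isHomogeneous_linearVector B i).mul (isHomogeneous_linearVector A j)
      rw [cross_apply]
      fin_cases l
      exacts [(hmul 1 2).sub (hmul 2 1), (hmul 2 0).sub (hmul 0 2), (hmul 0 1).sub (hmul 1 0)]
  have := congrArg (fun v l => eval s (v l)) hpar
  simpa only [map_cross, eval_linearVector, Pi.zero_apply, map_zero, ← Pi.zero_def] using this

variable [CharZero K]

theorem linearCombination_restrict_injective (hrad : VarsMemRadical f)
    (hf : ∀ l, (f l).IsHomogeneous d) (hd : 1 < d)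
    (hconst : ∀ i l, coeffDerivation (P.deriv i) (f l) = 0) {w : Fin 3 → K}
    (hw : linearCombination K (fun l => restrict P.coord (f l)) w = 0) : w = 0 := by
  by_contra hw0
  obtain ⟨c, hc⟩ := exists_smul_eq_of_cross_eq_zero hw0
    (P.cross_deriv_eq_zero hrad hf hd hconst hw)
  have hzero : linearCombination K f w = 0 := by
    refine P.eq_zero_of_hyperplane_dvd 0 (c := c) (hyperplane_dvd_of_restrict_eq_zero ?_) ?_
    · rw [algHom_linearCombination, hw]
    · rw [coeffDerivation_linearCombination (hconst 0), ← hc, map_smul, smul_eq_C_mul]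
  rw [linearCombination_eq_dotProduct, dotProduct_comm] at hzero
  have := hrad.eq_zero_of_dotProduct_eq_zero hf hzero fun l => by
    rw [totalDegree_C]
    omega
  exact hw0 (funext fun l => C_eq_zero.1 (congrFun this l))

theorem eq_zero_of_linear_syzygy_of_cross_eq_zero (hrad : VarsMemRadical f)
    (hf : ∀ l, (f l).IsHomogeneous d) (hd : 1 < d)
    (hconst : ∀ i l, coeffDerivation (P.deriv i) (f l) = 0) {B : Fin 2 → Fin 3 → K}
    (hB : ∑ j, X j * linearCombination K (fun l => restrict P.coord (f l)) (B j) = 0)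
    (hcross : B 0 ⨯₃ B 1 = 0) : B = 0 := by
  have hinj {w} := P.linearCombination_restrict_injective hrad hf hd hconst (w := w)
  rw [Fin.sum_univ_two] at hB
  by_cases hB0 : B 0 = 0
  · rw [hB0, map_zero, mul_zero, zero_add] at hB
    have hB1 : B 1 = 0 := hinj ((mul_eq_zero.1 hB).resolve_left (X_ne_zero _))
    ext j l
    fin_cases j <;> simp [hB0, hB1]
  · obtain ⟨c, hc⟩ := exists_smul_eq_of_cross_eq_zero hB0 hcross
    rw [← hc, map_smul, mul_smul_comm, ← smul_mul_assoc, ← add_mul] at hB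
    refine absurd (hinj ((mul_eq_zero.1 hB).resolve_left fun h => ?_)) hB0
    simpa using congrArg (eval ![1, 0]) h

theorem linear_syzygy_unique (hrad : VarsMemRadical f)
    (hf : ∀ l, (f l).IsHomogeneous d) (hd : 2 < d)
    (hconst : ∀ i l, coeffDerivation (P.deriv i) (f l) = 0) {A B : Fin 2 → Fin 3 → K} (hB0 : B ≠ 0)
    (hB : ∑ j, X j * linearCombination K (fun l => restrict P.coord (f l)) (B j) = 0)
    (hA : ∑ j, X j * linearCombination K (fun l => restrict P.coord (f l)) (A j) = 0) :
    ∃ c : K, A = c • B := by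
  have hindep : B 0 ⨯₃ B 1 ≠ 0 := fun h => hB0
    (P.eq_zero_of_linear_syzygy_of_cross_eq_zero hrad hf (by omega) hconst hB h)
  have heval := P.cross_eq_zero_of_linear_syzygies hrad hf hd hB hA
  have h0 : B 0 ⨯₃ A 0 = 0 := by simpa using heval ![1, 0]
  have h1 : B 1 ⨯₃ A 1 = 0 := by simpa using heval ![0, 1]
  have h01 : B 0 ⨯₃ A 1 + B 1 ⨯₃ A 0 = 0 := by
    simpa [h0, h1, add_comm] using heval ![1, 1]
  obtain ⟨c, hc⟩ := exists_smul_eq_of_cross_eq_zero (fun h => hindep (by simp [h])) h0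
  obtain ⟨c', hc'⟩ := exists_smul_eq_of_cross_eq_zero (fun h => hindep (by simp [h])) h1
  have hcc : (c' - c) • (B 0 ⨯₃ B 1) = 0 := by
    rw [← hc, ← hc', map_smul, map_smul, ← cross_anticomm (B 0) (B 1)] at h01
    linear_combination (norm := module) h01
  have hcc' : c' = c := sub_eq_zero.1 ((smul_eq_zero.1 hcc).resolve_right hindep)
  refine ⟨c, funext fun j => ?_⟩
  fin_cases j
  exacts [hc.symm, by rw [← hcc']; exact hc'.symm]

end ParameterFrame

section Connection

variable {k K : Type*} [CommRing k] [Field K] [Algebra k K] {D : Fin 2 → Derivation k K K}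
  {c b b' : Fin 2 → K} {s s' γ : K}

theorem curvature_mul_eq_zero {m : K} {t : Fin 2 → K} (hcomm : D 0 (D 1 m) = D 1 (D 0 m))
    (hm : ∀ i, D i m = t i * m) : (D 1 (t 0) - D 0 (t 1)) * m = 0 := by
  simp only [hm, Derivation.leibniz, smul_eq_mul] at hcomm
  linear_combination -hcomm

/-- The equations `∂_i b_j = c_i b_j + δ_{ij} s` satisfied by each coordinate of a linear syzygy
`x₀ b₀ + x₁ b₁ + L s` along the generic line `L = 0`. -/
def IsSyzygySolution (D : Fin 2 → Derivation k K K) (c b : Fin 2 → K) (s : K) : Prop :=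
  ∀ i j, D i (b j) = c i * b j + if i = j then s else 0

theorem IsSyzygySolution.deriv_zero (h : IsSyzygySolution D c b s)
    (hcomm : ∀ x, D 0 (D 1 x) = D 1 (D 0 x)) (hγ : γ = D 1 (c 0) - D 0 (c 1)) :
    D 0 s = c 0 * s + γ * b 1 := by
  have := hcomm (b 1)
  simp only [h 0 1, h 1 1, map_add, Derivation.leibniz, smul_eq_mul, zero_ne_one, if_true,
    if_false, add_zero] at this
  linear_combination this - b 1 * hγ

theorem IsSyzygySolution.deriv_one (h : IsSyzygySolution D c b s)
    (hcomm : ∀ x, D 0 (D 1 x) = D 1 (D 0 x)) (hγ : γ = D 1 (c 0) - D 0 (c 1)) :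
    D 1 s = c 1 * s - γ * b 0 := by
  have := hcomm (b 0)
  simp only [h 0 0, h 1 0, map_add, Derivation.leibniz, smul_eq_mul, one_ne_zero, if_true,
    if_false, add_zero] at this
  linear_combination -this + b 0 * hγ

theorem IsSyzygySolution.three_mul_curvature_mul (h : IsSyzygySolution D c b s)
    (hcomm : ∀ x, D 0 (D 1 x) = D 1 (D 0 x)) (hγ : γ = D 1 (c 0) - D 0 (c 1)) :
    3 * γ * s = -(D 0 γ * b 0 + D 1 γ * b 1) := by
  have := hcomm s
  simp only [h.deriv_zero hcomm hγ, h.deriv_one hcomm hγ, h 0 0, h 1 1, map_add, map_sub,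
    Derivation.leibniz, smul_eq_mul, if_true] at this
  linear_combination -this + s * hγ

theorem IsSyzygySolution.minor_eq_zero [CharZero K] (h : IsSyzygySolution D c b s)
    (h' : IsSyzygySolution D c b' s') (hcomm : ∀ x, D 0 (D 1 x) = D 1 (D 0 x))
    (hγ : γ = D 1 (c 0) - D 0 (c 1)) (hγ0 : γ ≠ 0) : b 0 * b' 1 - b' 0 * b 1 = 0 := by
  set n := b 0 * b' 1 - b' 0 * b 1
  have hs := h.three_mul_curvature_mul hcomm hγ
  have hs' := h'.three_mul_curvature_mul hcomm hγ
  have hn : ∀ i, 3 * γ * D i n = (6 * c i * γ - D i γ) * n := by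
    refine Fin.forall_fin_two.2 ⟨?_, ?_⟩ <;>
      simp only [n, map_sub, Derivation.leibniz, smul_eq_mul, h 0 0, h 0 1, h 1 0, h 1 1, h' 0 0,
        h' 0 1, h' 1 0, h' 1 1, if_true, zero_ne_one, one_ne_zero, if_false]
    · linear_combination b' 1 * hs - b 1 * hs'
    · linear_combination b 0 * hs' - b' 0 * hs
  -- `γ n³` is a horizontal section of the connection with form `6 c`, whose curvature is `6 γ`.
  have hm (i : Fin 2) : D i (γ * n ^ 3) = 6 * (c i * (γ * n ^ 3)) := by
    simp only [Derivation.leibniz, Derivation.leibniz_pow, smul_eq_mul, nsmul_eq_mul]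
    push_cast
    linear_combination n ^ 2 * hn i
  have hcurv := curvature_mul_eq_zero (t := fun i => 6 * c i) (hcomm _)
    (by simpa only [mul_assoc] using hm)
  have hD6 (i) : D i (6 : K) = 0 := by exact_mod_cast Derivation.map_natCast (D i) 6
  rw [Derivation.leibniz, Derivation.leibniz, hD6, hD6] at hcurv
  have : 6 * γ ^ 2 * n ^ 3 = 0 := by
    simp only [smul_eq_mul] at hcurv
    linear_combination hcurv + 6 * γ * n ^ 3 * hγ
  simpa [hγ0] using this

end Connection

namespace ParameterFrame

open Fintype (linearCombination)

variable {k K : Type*} [Field k] [Field K] [Algebra k K] (P : ParameterFrame k K 2)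
  {f : Fin 3 → MvPolynomial (Fin 3) K} {d : ℕ} {B : Fin 2 → Fin 3 → K} {s : Fin 3 → K}
  {q : MvPolynomial (Fin 3) K}

theorem coeffDerivation_linear_relation (hconst : ∀ i l, coeffDerivation (P.deriv i) (f l) = 0)
    (i : Fin 2) :
    coeffDerivation (P.deriv i) (∑ j, X j.castSucc * linearCombination K f (B j) +
        hyperplane P.coord * linearCombination K f s) =
      ∑ j, X j.castSucc *
        linearCombination K f (fun l => P.deriv i (B j l) - if i = j then s l else 0) +
      hyperplane P.coord * linearCombination K f fun l => P.deriv i (s l) := by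
  have hsub (j : Fin 2) (w : Fin 3 → K) :
      linearCombination K f (fun l => w l - if i = j then s l else 0) =
        linearCombination K f w - if i = j then linearCombination K f s else 0 := by
    split_ifs
    · exact map_sub _ _ _
    · simp
  simp only [map_add, map_sum, Derivation.leibniz, coeffDerivation_linearCombination (hconst i),
    P.coeffDerivation_hyperplane, coeffDerivation_X, smul_eq_mul, add_zero, hsub,
    mul_sub, mul_ite, mul_zero, Finset.sum_sub_distrib, Finset.sum_ite_eq, Finset.mem_univ, if_true]
  ring

theorem linear_syzygy_of_relation
    (h : ∑ j, X j.castSucc * linearCombination K f (B j) +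
      hyperplane P.coord * linearCombination K f s = hyperplane P.coord ^ 2 * q) :
    ∑ j, X j * linearCombination K (fun l => restrict P.coord (f l)) (B j) = 0 := by
  simpa [algHom_linearCombination, -Fin.sum_univ_two] using congrArg (restrict P.coord) h

variable [CharZero K]

theorem exists_isSyzygySolution (hrad : VarsMemRadical f) (hf : ∀ l, (f l).IsHomogeneous d)
    (hd : 2 < d) (hconst : ∀ i l, coeffDerivation (P.deriv i) (f l) = 0) (hB : B ≠ 0)
    (h : ∑ j, X j.castSucc * linearCombination K f (B j) +
      hyperplane P.coord * linearCombination K f s = hyperplane P.coord ^ 2 * q) :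
    ∃ c : Fin 2 → K, ∀ l, IsSyzygySolution P.deriv c (fun j => B j l) (s l) := by
  have hderiv (i : Fin 2) : ∃ c : K, (fun j l => P.deriv i (B j l) - if i = j then s l else 0) =
      c • B := by
    refine P.linear_syzygy_unique hrad hf hd hconst hB (P.linear_syzygy_of_relation h) ?_
    have := congrArg (fun p => restrict P.coord (coeffDerivation (P.deriv i) p)) h
    simpa only [P.coeffDerivation_linear_relation hconst, map_add, map_sum, map_mul, pow_two,
      restrict_X_castSucc, restrict_hyperplane, algHom_linearCombination, Derivation.leibniz,
      smul_eq_mul, zero_mul, mul_zero, add_zero] using this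
  choose c hc using hderiv
  refine ⟨c, fun l i j => ?_⟩
  have := congrFun (congrFun (hc i) j) l
  simp only [Pi.smul_apply, smul_eq_mul] at this
  linear_combination this

theorem eq_zero_of_linear_relation (hrad : VarsMemRadical f) (hf : ∀ l, (f l).IsHomogeneous d)
    (hd : 2 < d) (hconst : ∀ i l, coeffDerivation (P.deriv i) (f l) = 0)
    (h : ∑ j, X j.castSucc * linearCombination K f (B j) +
      hyperplane P.coord * linearCombination K f s = hyperplane P.coord ^ 2 * q) : q = 0 := by
  have hL := hyperplane_ne_zero P.coord
  by_cases hB : B = 0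
  · have hs : linearCombination K f s = hyperplane P.coord * q :=
      mul_left_cancel₀ hL (by simpa [hB, pow_two, mul_assoc] using h)
    have hs0 : s = 0 := by
      refine P.linearCombination_restrict_injective hrad hf (by omega) hconst ?_
      rw [← algHom_linearCombination, hs, map_mul, restrict_hyperplane, zero_mul]
    simpa [hs0, hL] using hs.symm
  obtain ⟨c, hc⟩ := P.exists_isSyzygySolution hrad hf hd hconst hB h
  have hcomm := P.deriv_comm 0 1
  obtain hγ | hγ := eq_or_ne (P.deriv 1 (c 0) - P.deriv 0 (c 1)) 0
  · suffices hyperplane P.coord ^ 2 * q = 0 by simpa [hL] using this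
    refine P.eq_zero_of_hyperplane_dvd 0 (c := c 0) ((dvd_pow_self _ two_ne_zero).mul_right q) ?_
    have hds (l) : P.deriv 0 (s l) = c 0 * s l := by
      simpa using (hc l).deriv_zero hcomm hγ.symm
    have hdB (j l) : P.deriv 0 (B j l) - (if 0 = j then s l else 0) = c 0 * B j l := by
      rw [hc l 0 j, add_sub_cancel_right]
    have hsmul (w : Fin 3 → K) :
        linearCombination K f (fun l => c 0 * w l) = C (c 0) * linearCombination K f w := by
      rw [← smul_eq_C_mul, ← map_smul]
      rfl
    rw [← h, P.coeffDerivation_linear_relation hconst]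
    simp only [hds, hdB, hsmul, mul_add, Finset.mul_sum]
    simp only [mul_left_comm]
  · refine absurd (P.eq_zero_of_linear_syzygy_of_cross_eq_zero hrad hf (by omega) hconst ?_ ?_) hB
    · exact P.linear_syzygy_of_relation h
    · have hminor (l l') := (hc l).minor_eq_zero (hc l') hcomm rfl hγ
      rw [cross_apply, hminor, hminor, hminor]
      simp

end ParameterFrame

/-! ### The frame of a rational function field -/

section ExtendDerivation

variable {R S T M : Type*} [CommRing R] [CommRing S] [CommRing T] [Algebra R S] [Algebra R T]
  [Algebra S T] [IsScalarTower R S T] [Algebra.FormallyEtale S T] [AddCommGroup M] [Module R M]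
  [Module S M] [Module T M] [IsScalarTower R S M] [IsScalarTower R T M] [IsScalarTower S T M]

open KaehlerDifferential in
theorem compAlgebraMap_bijective :
    Function.Bijective fun D : Derivation R T M => D.compAlgebraMap S := by
  let Φ : Derivation R T M ≃ Derivation R S M :=
    (linearMapEquivDerivation R T).symm.toEquiv.trans <|
      ((tensorKaehlerEquivOfFormallyEtale R S T).congrLeft M T).symm.toEquiv.trans <|
      (LinearMap.liftBaseChangeEquiv T).symm.toEquiv.trans
      (linearMapEquivDerivation R S).toEquiv
  convert Φ.bijective using 1
  funext D
  ext s
  simp [Φ]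

end ExtendDerivation

theorem pderiv_pderiv_comm {k σ : Type*} [CommRing k] (i j : σ) (p : MvPolynomial σ k) :
    pderiv i (pderiv j p) = pderiv j (pderiv i p) := by
  classical
  have h : ⁅pderiv (R := k) i, pderiv (R := k) j⁆ = 0 := derivation_ext fun l => by
    rw [Derivation.commutator_apply]
    simp [pderiv_X, Pi.single_apply, apply_ite]
  rw [← sub_eq_zero, ← Derivation.commutator_apply, h, Derivation.zero_apply]

/-- The variables of a rational function field, with the partial derivatives. -/
noncomputable def rationalFrame (k : Type*) [Field k] (n : ℕ) :
    ParameterFrame k (FractionRing (MvPolynomial (Fin n) k)) n :=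
  let S := MvPolynomial (Fin n) k
  let K := FractionRing S
  have : Algebra.FormallyEtale S K := .of_isLocalization (nonZeroDivisors S)
  let restrictToPoly := Equiv.ofBijective _
    (compAlgebraMap_bijective (R := k) (S := S) (T := K) (M := K))
  let D i := restrictToPoly.symm ((Algebra.linearMap S K).compDer (pderiv i))
  have hD (i) (p : S) : D i (algebraMap S K p) = algebraMap S K (pderiv i p) :=
    DFunLike.congr_fun
      (restrictToPoly.apply_symm_apply ((Algebra.linearMap S K).compDer (pderiv i))) p
  { coord j := algebraMap S K (X j)
    deriv := D
    deriv_coord i j := by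
      classical
      simp [hD, pderiv_X, Pi.single_apply, apply_ite, eq_comm]
    deriv_comm i j x := by
      have h : ⁅D i, D j⁆ = 0 := restrictToPoly.injective <| Derivation.ext fun p => by
        change ⁅D i, D j⁆ (algebraMap S K p) = 0
        rw [Derivation.commutator_apply, hD, hD, hD, hD, pderiv_pderiv_comm, sub_self]
      rw [← sub_eq_zero, ← Derivation.commutator_apply, h, Derivation.zero_apply] }

/-! ### Moments of the powers of a variable linear form -/

section Moment

variable {k : Type*} [CommRing k] {n : ℕ} (φ : MvPolynomial (Fin (n + 1)) k →ₗ[k] k)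

/-- The polynomial function `c ↦ φ (Lᵐ p)` of the coefficients of the linear form
`L = X (last n) - ∑ j, c j X j`. For `p = 1` it is, up to the signs of the variables, the
dehomogenized Macaulay dual generator of the restriction of `φ` to forms of degree `m`. -/
noncomputable def moment (m : ℕ) : MvPolynomial (Fin (n + 1)) k →ₗ[k] MvPolynomial (Fin n) k :=
  (extendScalars (MvPolynomial (Fin n) k) φ).restrictScalars k ∘ₗ
    LinearMap.mulLeft k (hyperplane X ^ m) ∘ₗ
    (mapAlgHom (Algebra.ofId k (MvPolynomial (Fin n) k))).toLinearMap

theorem moment_apply (m : ℕ) (p : MvPolynomial (Fin (n + 1)) k) :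
    moment φ m p = extendScalars (MvPolynomial (Fin n) k) φ
      (hyperplane X ^ m * MvPolynomial.map (algebraMap k (MvPolynomial (Fin n) k)) p) := rfl

theorem moment_zero (p : MvPolynomial (Fin (n + 1)) k) : moment φ 0 p = C (φ p) := by
  rw [moment_apply, pow_zero, one_mul, extendScalars_map, algebraMap_eq]

theorem moment_succ (m : ℕ) (p : MvPolynomial (Fin (n + 1)) k) :
    moment φ (m + 1) p =
      moment φ m (X (Fin.last n) * p) - ∑ j, X j * moment φ m (X j.castSucc * p) := by
  have hexpand (M r : MvPolynomial (Fin (n + 1)) (MvPolynomial (Fin n) k)) :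
      M * hyperplane X * r =
        M * (X (Fin.last n) * r) -
          ∑ j, (X j : MvPolynomial (Fin n) k) • (M * (X j.castSucc * r)) := by
    rw [hyperplane, mul_assoc, sub_mul, mul_sub, Finset.sum_mul, Finset.mul_sum]
    exact congr_arg _ (Finset.sum_congr rfl fun j _ => by rw [smul_eq_C_mul]; ring)
  simp only [moment_apply, map_mul, map_X, pow_succ, hexpand, map_sub, map_sum, map_smul,
    smul_eq_mul]

theorem pderiv_moment_succ (j : Fin n) (m : ℕ) (p : MvPolynomial (Fin (n + 1)) k) :
    pderiv j (moment φ (m + 1) p) = -(m + 1) * moment φ m (X j.castSucc * p) := by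
  classical
  have hX (i : Fin n) : pderiv j (X i : MvPolynomial (Fin n) k) = if j = i then 1 else 0 := by
    simp [pderiv_X, Pi.single_apply, eq_comm]
  rw [moment_apply, derivation_extendScalars, Derivation.leibniz, Derivation.leibniz_pow,
    coeffDerivation_hyperplane hX, coeffDerivation_map_algebraMap, moment_apply,
    RingHom.map_mul (MvPolynomial.map _), map_X, ← smul_eq_mul (-_), ← map_smul]
  congr 1
  simp only [smul_eq_C_mul, map_neg, map_add, map_natCast, map_one, smul_eq_mul, nsmul_eq_mul,
    Nat.add_sub_cancel, Nat.cast_add, Nat.cast_one]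
  ring

theorem totalDegree_moment_le (m : ℕ) (p : MvPolynomial (Fin (n + 1)) k) :
    (moment φ m p).totalDegree ≤ m := by
  cases subsingleton_or_nontrivial k
  · simp [Subsingleton.elim (moment φ m p) 0]
  induction m generalizing p with
  | zero => rw [moment_zero, totalDegree_C]
  | succ m ih =>
    rw [moment_succ]
    refine (totalDegree_sub _ _).trans (max_le ((ih _).trans m.le_succ) ?_)
    refine totalDegree_finsetSum_le fun j _ => (totalDegree_mul _ _).trans ?_
    rw [totalDegree_X, add_comm]
    exact Nat.succ_le_succ (ih _)

variable [NoZeroDivisors k] [CharZero k] {φ}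

theorem moment_X_mul_eq_zero {m : ℕ} {p : MvPolynomial (Fin (n + 1)) k}
    (h : moment φ (m + 1) p = 0) (i : Fin (n + 1)) : moment φ m (X i * p) = 0 := by
  have hcast (j : Fin n) : moment φ m (X j.castSucc * p) = 0 := by
    have := pderiv_moment_succ φ j m p
    rw [h, map_zero, eq_comm, mul_eq_zero, neg_eq_zero] at this
    exact this.resolve_left (Nat.cast_add_one_ne_zero m)
  refine Fin.lastCases ?_ hcast i
  simpa [hcast, moment_succ] using h

theorem apply_mul_eq_zero_of_moment_eq_zero {m : ℕ} {p q : MvPolynomial (Fin (n + 1)) k}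
    (h : moment φ m p = 0) (hq : q.IsHomogeneous m) : φ (q * p) = 0 := by
  induction m generalizing p q with
  | zero =>
    rw [moment_zero, C_eq_zero] at h
    rw [totalDegree_eq_zero_iff_eq_C.1 (Nat.le_zero.1 hq.totalDegree_le), ← smul_eq_C_mul,
      map_smul, h, smul_zero]
  | succ m ih =>
    have hs : (m + 1) • φ (q * p) = 0 := by
      rw [← map_nsmul, ← smul_mul_assoc, ← hq.sum_X_mul_pderiv, Finset.sum_mul, map_sum]
      refine Finset.sum_eq_zero fun i _ => ?_
      rw [mul_comm (X i), mul_assoc]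
      exact ih (moment_X_mul_eq_zero h i) hq.pderiv
    rw [nsmul_eq_mul] at hs
    exact (mul_eq_zero.1 hs).resolve_left (Nat.cast_ne_zero.2 m.succ_ne_zero)

end Moment

/-! ### Forms with vanishing Hessian -/

section Pderiv

variable {R k σ : Type*} [CommRing R]

theorem totalDegree_pderiv_lt {i : σ} {p : MvPolynomial σ R} (h : pderiv i p ≠ 0) :
    (pderiv i p).totalDegree < p.totalDegree := by
  have hle (m) (hm : m ∈ (pderiv i p).support) : m.degree + 1 ≤ p.totalDegree := by
    rw [MvPolynomial.mem_support_iff, coeff_pderiv] at hm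
    have := le_totalDegree (MvPolynomial.mem_support_iff.2 (left_ne_zero_of_mul hm))
    change (m + Finsupp.single i 1).degree ≤ _ at this
    simpa [Finsupp.degree_single] using this
  obtain ⟨m, hm⟩ := support_nonempty.2 h
  exact (Finset.sup_lt_iff ((Nat.succ_pos _).trans_le (hle m hm))).2 hle

theorem pderiv_eq_zero_of_dvd [IsDomain R] {i : σ} {p : MvPolynomial σ R} (h : p ∣ pderiv i p) :
    pderiv i p = 0 := by
  by_contra h0
  exact (totalDegree_pderiv_lt h0).not_ge (totalDegree_le_of_dvd_of_isDomain h h0)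

theorem eq_C_of_pderiv_eq_zero [NoZeroDivisors R] [CharZero R] {p : MvPolynomial σ R}
    (h : ∀ i, pderiv i p = 0) : p = C (coeff 0 p) := by
  classical
  ext m
  rw [coeff_C]
  split_ifs with hm
  · rw [hm]
  · obtain ⟨i, hi⟩ : ∃ i, m i ≠ 0 := not_forall.1 fun hall => hm (Finsupp.ext hall).symm
    have hc := congrArg (coeff (m - Finsupp.single i 1)) (h i)
    rw [coeff_pderiv, coeff_zero,
      tsub_add_cancel_of_le (by simpa [Nat.one_le_iff_ne_zero] using hi)] at hc
    exact (mul_eq_zero.1 hc).resolve_right (Nat.cast_add_one_ne_zero _)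

theorem totalDegree_pow_of_isDomain [IsDomain R] (p : MvPolynomial σ R) (n : ℕ) :
    (p ^ n).totalDegree = n * p.totalDegree := by
  obtain rfl | hp := eq_or_ne p 0
  · cases n <;> simp
  induction n with
  | zero => simp
  | succ n ih =>
    rw [pow_succ, totalDegree_mul_of_isDomain (pow_ne_zero n hp) hp, ih, Nat.succ_mul]

variable [Field k]

theorem exists_eq_pow_of_pow_succ_eq {d : ℕ} {F G : MvPolynomial σ k} {c : k} (hF : F ≠ 0)
    (hc : c ≠ 0) (h : G ^ (d + 1) = C c * F ^ d) : ∃ g, F = C c * g ^ (d + 1) := by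
  have hcC : (C c⁻¹ : MvPolynomial σ k) * C c = 1 := by rw [← C_mul, inv_mul_cancel₀ hc, C_1]
  obtain ⟨g, rfl⟩ : G ∣ F :=
    (IsIntegrallyClosed.pow_dvd_pow_iff (n := d + 1) d.succ_ne_zero).1
      ⟨C c⁻¹ * F, by linear_combination -C c⁻¹ * F * h - F ^ (d + 1) * hcC⟩
  refine ⟨g, mul_left_cancel₀ (pow_ne_zero d (left_ne_zero_of_mul hF)) ?_⟩
  linear_combination g * h

variable [CharZero k]

theorem exists_eq_C_mul_of_pderiv_mul_eq {u v : MvPolynomial σ k} (hv : v ≠ 0)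
    (h : ∀ i, pderiv i u * v = u * pderiv i v) : ∃ c, u = C c * v := by
  obtain ⟨v', u', c, hrel, rfl, rfl⟩ := UniqueFactorizationMonoid.exists_reduced_factors v hv u
  have hc : c ≠ 0 := left_ne_zero_of_mul hv
  have h' (i) : pderiv i u' * v' = u' * pderiv i v' := by
    have := h i
    rw [pderiv_mul, pderiv_mul] at this
    exact mul_left_cancel₀ (mul_ne_zero hc hc) (by linear_combination this)
  have hu := eq_C_of_pderiv_eq_zero fun i => pderiv_eq_zero_of_dvd
    (hrel.symm.dvd_of_dvd_mul_right (Dvd.intro _ (h' i).symm))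
  have hv' := eq_C_of_pderiv_eq_zero fun i => pderiv_eq_zero_of_dvd
    (hrel.dvd_of_dvd_mul_left (Dvd.intro_left _ (h' i)))
  have hb : coeff 0 v' ≠ 0 := fun h0 => hv (by rw [hv', h0, C_0, mul_zero])
  refine ⟨coeff 0 u' / coeff 0 v', ?_⟩
  rw [hu, hv', coeff_zero_C, coeff_zero_C, mul_left_comm, ← C_mul, div_mul_cancel₀ _ hb]

end Pderiv

section Hessian

variable {k : Type*} [Field k]

/-- A vector field `(p, q)` on the affine plane and a function `δ` such that `(δ, p, q)` gives a
kernel vector, in suitable coordinates, of the Hessian matrix of the homogenization of `F` in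
degree `d + 1`. -/
structure IsHessianKernel (d : ℕ) (F δ p q : MvPolynomial (Fin 2) k) : Prop where
  along_self : p * pderiv 0 F + q * pderiv 1 F = (d + 1) * δ * F
  along_pderiv_zero : p * pderiv 0 (pderiv 0 F) + q * pderiv 0 (pderiv 1 F) = d * δ * pderiv 0 F
  along_pderiv_one : p * pderiv 0 (pderiv 1 F) + q * pderiv 1 (pderiv 1 F) = d * δ * pderiv 1 F

variable {d : ℕ} {F δ p q : MvPolynomial (Fin 2) k}

theorem IsHessianKernel.deriv_along_self (h : IsHessianKernel d F δ p q) :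
    IsHessianKernel d F (p * pderiv 0 δ + q * pderiv 1 δ)
      (p * pderiv 0 p + q * pderiv 1 p - δ * p) (p * pderiv 0 q + q * pderiv 1 q - δ * q) := by
  obtain ⟨h0, h1, h2⟩ := h
  have h0a := congrArg (pderiv 0) h0
  have h0b := congrArg (pderiv 1) h0
  have h1a := congrArg (pderiv 0) h1
  have h1b := congrArg (pderiv 1) h1
  have h2a := congrArg (pderiv 0) h2
  have h2b := congrArg (pderiv 1) h2
  simp only [map_add, pderiv_mul, Derivation.map_natCast, Derivation.map_one_eq_zero,
    pderiv_pderiv_comm (1 : Fin 2) 0] at h0a h0b h1a h1b h2a h2b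
  refine ⟨?_, ?_, ?_⟩
  · linear_combination p * h0a + q * h0b - p * h1 - q * h2
  · linear_combination q * h1b - q * h2a + pderiv 0 p * h1 + pderiv 0 q * h2 + d * δ * h0a
      - (d + 1) * δ * h1 - d * pderiv 0 δ * h0
  · linear_combination p * h2a - p * h1b + pderiv 1 p * h1 + pderiv 1 q * h2 + d * δ * h0b
      - (d + 1) * δ * h2 - d * pderiv 1 δ * h0

/-- The vector field `(p, q)` is parallel to its derivative along itself, that is, its integral
curves are straight lines. -/
def IsStraight (p q : MvPolynomial (Fin 2) k) : Prop :=
  p * (p * pderiv 0 q + q * pderiv 1 q) = q * (p * pderiv 0 p + q * pderiv 1 p)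

theorem IsHessianKernel.exists_straight (h : IsHessianKernel d F δ p q) (hpq : p ≠ 0 ∨ q ≠ 0) :
    ∃ δ' p' q', IsHessianKernel d F δ' p' q' ∧ (p' ≠ 0 ∨ q' ≠ 0) ∧ IsStraight p' q' := by
  by_cases hs : IsStraight p q
  · exact ⟨δ, p, q, h, hpq, hs⟩
  -- Two independent kernel vector fields combine to one parallel to the first axis.
  obtain ⟨h0, h1, h2⟩ := h.deriv_along_self
  set δ₁ := p * pderiv 0 δ + q * pderiv 1 δ
  set p₁ := p * pderiv 0 p + q * pderiv 1 p - δ * p with hp₁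
  set q₁ := p * pderiv 0 q + q * pderiv 1 q - δ * q with hq₁
  refine ⟨q₁ * δ - q * δ₁, q₁ * p - q * p₁, 0, ⟨?_, ?_, ?_⟩, Or.inl fun hz => hs ?_,
    by simp [IsStraight]⟩
  · linear_combination q₁ * h.along_self - q * h0
  · linear_combination q₁ * h.along_pderiv_zero - q * h1
  · linear_combination q₁ * h.along_pderiv_one - q * h2
  · rw [hp₁, hq₁] at hz
    rw [IsStraight]
    linear_combination hz

variable [CharZero k]

theorem exists_eq_affine_of_pderiv {a b : k} (h0 : pderiv 0 p = C a) (h1 : pderiv 1 p = C b) :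
    ∃ c, p = C a * X 0 + C b * X 1 + C c := by
  have := eq_C_of_pderiv_eq_zero (p := p - C a * X 0 - C b * X 1) fun i => by
    fin_cases i <;> simp [h0, h1, pderiv_X]
  exact ⟨_, by linear_combination this⟩

-- Geometrically, straight integral curves are either concurrent or parallel lines.
theorem IsStraight.exists_eq_affine (hs : IsStraight p q) (hrel : IsRelPrime p q) :
    ∃ κ a b : k, p = C κ * X 0 + C a ∧ q = C κ * X 1 + C b := by
  rw [IsStraight] at hs
  have hp1 : pderiv 1 p = 0 := pderiv_eq_zero_of_dvd <|
    hrel.dvd_of_dvd_mul_left <| hrel.dvd_of_dvd_mul_left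
      ⟨p * pderiv 0 q + q * pderiv 1 q - q * pderiv 0 p, by linear_combination -hs⟩
  have hq0 : pderiv 0 q = 0 := pderiv_eq_zero_of_dvd <|
    hrel.symm.dvd_of_dvd_mul_left <| hrel.symm.dvd_of_dvd_mul_left
      ⟨p * pderiv 0 p + q * pderiv 1 p - p * pderiv 1 q, by linear_combination hs⟩
  have unit_eq_C {u : MvPolynomial (Fin 2) k} (hu : IsUnit u) : u = C (coeff 0 u) :=
    eq_C_of_pderiv_eq_zero fun _ => pderiv_eq_zero_of_dvd hu.dvd
  obtain rfl | hp := eq_or_ne p 0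
  · exact ⟨0, 0, _, by simp, by simpa using unit_eq_C (hrel (dvd_zero q) dvd_rfl)⟩
  obtain rfl | hq := eq_or_ne q 0
  · exact ⟨0, _, 0, by simpa using unit_eq_C (hrel dvd_rfl (dvd_zero p)), by simp⟩
  have hpq : pderiv 1 q = pderiv 0 p := by
    refine mul_left_cancel₀ (mul_ne_zero hp hq) ?_
    rw [hq0, hp1] at hs
    linear_combination hs
  have hκ := eq_C_of_pderiv_eq_zero (p := pderiv 0 p) <| Fin.forall_fin_two.2
    ⟨by rw [← hpq, pderiv_pderiv_comm, hq0, map_zero], by rw [pderiv_pderiv_comm, hp1, map_zero]⟩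
  obtain ⟨a, ha⟩ := exists_eq_affine_of_pderiv hκ (hp1.trans C_0.symm)
  obtain ⟨b, hb⟩ := exists_eq_affine_of_pderiv (hq0.trans C_0.symm) (hpq.trans hκ)
  exact ⟨_, a, b, by simpa using ha, by simpa using hb⟩

theorem IsHessianKernel.exists_affine (h : IsHessianKernel d F δ p q) (hpq : p ≠ 0 ∨ q ≠ 0) :
    ∃ (κ a b : k) (δ' c : MvPolynomial (Fin 2) k), c ≠ 0 ∧ ![a, b, κ] ≠ 0 ∧
      IsHessianKernel d F δ' (c * (C κ * X 0 + C a)) (c * (C κ * X 1 + C b)) := by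
  obtain ⟨δ', P, Q, h', hPQ, hs⟩ := h.exists_straight hpq
  obtain ⟨p', q', c, hrel, rfl, rfl⟩ : ∃ p' q' c, IsRelPrime p' q' ∧ c * p' = P ∧ c * q' = Q := by
    rcases hPQ with hP | hQ
    · exact UniqueFactorizationMonoid.exists_reduced_factors P hP Q
    · exact UniqueFactorizationMonoid.exists_reduced_factors' P Q hQ
  have hc : c ≠ 0 := by
    rintro rfl
    simp at hPQ
  have hs' : IsStraight p' q' := by
    simp only [IsStraight, pderiv_mul] at hs
    refine mul_left_cancel₀ (mul_ne_zero hc (mul_ne_zero hc hc)) ?_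
    linear_combination hs
  obtain ⟨κ, a, b, rfl, rfl⟩ := hs'.exists_eq_affine hrel
  refine ⟨κ, a, b, δ', c, hc, fun h0 => ?_, h'⟩
  have hab : a = 0 ∧ b = 0 ∧ κ = 0 := by simpa using h0
  simp [hab] at hPQ

theorem IsHessianKernel.exists_pow_eq {c : MvPolynomial (Fin 2) k} {κ a b : k} (hc : c ≠ 0)
    (hF : F ≠ 0)
    (h : IsHessianKernel d F δ (c * (C κ * X 0 + C a)) (c * (C κ * X 1 + C b))) :
    ∃ l : k, ((C κ * X 0 + C a) * pderiv 0 F + (C κ * X 1 + C b) * pderiv 1 F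
      - ((d : MvPolynomial (Fin 2) k) + 1) * C κ * F) ^ (d + 1) = C l * F ^ d := by
  obtain ⟨G, hG⟩ : ∃ G, G = (C κ * X 0 + C a) * pderiv 0 F + (C κ * X 1 + C b) * pderiv 1 F
    - ((d : MvPolynomial (Fin 2) k) + 1) * C κ * F := ⟨_, rfl⟩
  have x01 : pderiv 0 (X 1 : MvPolynomial (Fin 2) k) = 0 := pderiv_X_of_ne (by decide)
  have x10 : pderiv 1 (X 0 : MvPolynomial (Fin 2) k) = 0 := pderiv_X_of_ne (by decide)
  obtain ⟨ε, hε⟩ : ∃ ε, ε = δ - c * C κ := ⟨_, rfl⟩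
  have hself : c * G = (d + 1) * ε * F := by
    rw [hG, hε]
    linear_combination h.along_self
  have hpderiv (i : Fin 2) : c * pderiv i G = d * ε * pderiv i F := by
    rw [hG, hε]
    simp only [map_add, map_sub, pderiv_mul, pderiv_C, Derivation.map_natCast,
      Derivation.map_one_eq_zero]
    fin_cases i
    · simp only [Fin.zero_eta, pderiv_X_self, x01]
      linear_combination h.along_pderiv_zero
    · simp only [Fin.mk_one, pderiv_X_self, x10, pderiv_pderiv_comm (1 : Fin 2) 0]
      linear_combination h.along_pderiv_one
  have hlog (i : Fin 2) : (d + 1) * F * pderiv i G = d * G * pderiv i F :=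
    mul_left_cancel₀ hc (by linear_combination (d + 1) * F * hpderiv i - d * pderiv i F * hself)
  -- So `G ^ (d + 1) / F ^ d` has vanishing logarithmic derivatives.
  rw [← hG]
  refine exists_eq_C_mul_of_pderiv_mul_eq (pow_ne_zero d hF) fun i => ?_
  obtain _ | d := d
  · simpa [hF] using hlog i
  rw [pderiv_pow, pderiv_pow]
  push_cast at hlog ⊢
  linear_combination G ^ (d + 1) * F ^ d * hlog i

theorem exists_pderiv_relation_of_eq_pow {c : k} {g : MvPolynomial (Fin 2) k} (hc : c ≠ 0)
    (hdeg : F.totalDegree ≤ d + 1) (hg : F = C c * g ^ (d + 1)) :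
    ∃ a b : k, ![a, b, 0] ≠ 0 ∧ C a * pderiv 0 F + C b * pderiv 1 F = 0 := by
  obtain rfl | hg0 := eq_or_ne g 0
  · exact ⟨1, 0, by simp, by simp [hg]⟩
  have hgdeg : g.totalDegree ≤ 1 := by
    rw [hg, totalDegree_mul_of_isDomain (C_ne_zero.2 hc) (pow_ne_zero _ hg0), totalDegree_C,
      totalDegree_pow_of_isDomain, zero_add] at hdeg
    exact Nat.le_of_mul_le_mul_left (by simpa using hdeg) d.succ_pos
  have hconst (i) : ∃ a, pderiv i g = C a := by
    by_cases h0 : pderiv i g = 0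
    · exact ⟨0, by rw [h0, C_0]⟩
    · have := totalDegree_pderiv_lt h0
      exact ⟨_, totalDegree_eq_zero_iff_eq_C.1 (by omega)⟩
  obtain ⟨a, ha⟩ := hconst 0
  obtain ⟨b, hb⟩ := hconst 1
  by_cases hab : a = 0
  · exact ⟨1, 0, by simp, by simp [hg, ha, hab]⟩
  · refine ⟨b, -a, by simp [hab], ?_⟩
    rw [hg]
    simp only [pderiv_C_mul, pderiv_pow, ha, hb, C_neg]
    ring

/-- The **Gordan–Noether theorem** in three variables, in affine coordinates: the homogenization of
`F` is annihilated by a constant vector field, that is, it defines a cone. -/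
theorem IsHessianKernel.exists_cone (h : IsHessianKernel d F δ p q) (hpq : p ≠ 0 ∨ q ≠ 0)
    (hdeg : F.totalDegree ≤ d + 1) :
    ∃ a b κ : k, ![a, b, κ] ≠ 0 ∧
      (C κ * X 0 + C a) * pderiv 0 F + (C κ * X 1 + C b) * pderiv 1 F =
        ((d : MvPolynomial (Fin 2) k) + 1) * C κ * F := by
  obtain rfl | hF := eq_or_ne F 0
  · exact ⟨1, 0, 0, by simp, by simp⟩
  obtain ⟨κ, a, b, δ', c, hc, hne, h'⟩ := h.exists_affine hpq
  obtain ⟨l, hl⟩ := h'.exists_pow_eq hc hF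
  by_cases hl0 : l = 0
  · rw [hl0, C_0, zero_mul] at hl
    exact ⟨a, b, κ, hne, sub_eq_zero.1 (pow_eq_zero_iff d.succ_ne_zero |>.1 hl)⟩
  · obtain ⟨g, hg⟩ := exists_eq_pow_of_pow_succ_eq hF hl0 hl
    obtain ⟨a', b', hne', hab⟩ := exists_pderiv_relation_of_eq_pow hl0 hdeg hg
    exact ⟨a', b', 0, hne', by simpa using hab⟩

end Hessian

/-! ### Nondegeneracy on the generic line -/

section LinearForm

variable {R σ ι : Type*} [CommRing R]

theorem exists_eq_sum_C_mul_X [Fintype σ] {p : MvPolynomial σ R}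
    (hp : p.IsHomogeneous 1) : ∃ a : σ → R, p = ∑ i, C (a i) * X i := by
  have hmem := hp
  rw [← mem_homogeneousSubmodule, homogeneousSubmodule_one_eq_span_X,
    Submodule.mem_span_range_iff_exists_fun] at hmem
  obtain ⟨a, ha⟩ := hmem
  exact ⟨a, by simp only [← ha, smul_eq_C_mul]⟩

theorem exists_isHomogeneous_dotProduct [Fintype ι] {f : ι → MvPolynomial σ R} {d e : ℕ}
    (hf : ∀ i, (f i).IsHomogeneous d) {p : MvPolynomial σ R} (hp : p.IsHomogeneous (e + d))
    (hmem : p ∈ Ideal.span (Set.range f)) :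
    ∃ w : ι → MvPolynomial σ R, (∀ i, (w i).IsHomogeneous e) ∧ w ⬝ᵥ f = p := by
  let := MvPolynomial.gradedAlgebra (σ := σ) (R := R)
  obtain ⟨w, hw⟩ := mem_span_range_iff_dotProduct.1 hmem
  have hcomponent (n) (q : MvPolynomial σ R) :
      (DirectSum.decompose (homogeneousSubmodule σ R) q n : MvPolynomial σ R) =
        homogeneousComponent n q := decomposition.decompose'_apply q n
  have hmul (i) :
      homogeneousComponent (e + d) (w i * f i) = homogeneousComponent e (w i) * f i := by
    have := DirectSum.coe_decompose_mul_of_right_mem_of_le (𝒜 := homogeneousSubmodule σ R)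
      (a := w i) (hf i) (Nat.le_add_left d e)
    rwa [Nat.add_sub_cancel, hcomponent, hcomponent] at this
  refine ⟨fun i => homogeneousComponent e (w i),
    fun i => homogeneousComponent_isHomogeneous e _, ?_⟩
  rw [← (homogeneousComponent_of_mem hp).trans (if_pos rfl), ← hw, dotProduct, dotProduct, map_sum]
  exact Finset.sum_congr rfl fun i _ => (hmul i).symm

end LinearForm

section DegreeZero

variable {k : Type*} [Field k] [CharZero k] {n T : ℕ} {J : Ideal (MvPolynomial (Fin (n + 1)) k)}
  {φ : MvPolynomial (Fin (n + 1)) k →ₗ[k] k}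

theorem IsDualSocleGenerator.moment_one_ne_zero (hφ : IsDualSocleGenerator J T φ) :
    moment φ T 1 ≠ 0 := by
  intro h
  obtain ⟨p, hp, hφp⟩ := hφ.exists_ne_zero
  exact hφp (by simpa using apply_mul_eq_zero_of_moment_eq_zero h hp)

theorem IsDualSocleGenerator.nondegenerate_zero (hφ : IsDualSocleGenerator J T φ) :
    (formPairing (_root_.extendScalars (MvPolynomial (Fin n) k) φ)
      (hyperplane X ^ T) 0).Nondegenerate := by
  refine formPairing_nondegenerate_iff.2 fun q hq h => ?_
  obtain ⟨a, rfl⟩ : ∃ a, q = C a :=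
    ⟨_, totalDegree_eq_zero_iff_eq_C.1 (Nat.le_zero.1 hq.totalDegree_le)⟩
  have h1 := h 1 (isHomogeneous_one _ _)
  rw [mul_one, mul_comm, C_mul', map_smul, ← mul_one (hyperplane X ^ T),
    ← (MvPolynomial.map (algebraMap k (MvPolynomial (Fin n) k))).map_one, ← moment_apply,
    smul_eq_mul] at h1
  rw [(mul_eq_zero.1 h1).resolve_right hφ.moment_one_ne_zero, C_0]

end DegreeZero

section DegreeOne

variable {k : Type*} [Field k] {φ : MvPolynomial (Fin 3) k →ₗ[k] k} {d : ℕ}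

theorem moment_succ_fin_three (m : ℕ) (p : MvPolynomial (Fin 3) k) :
    moment φ (m + 1) p =
      moment φ m (X 2 * p) - X 0 * moment φ m (X 0 * p) - X 1 * moment φ m (X 1 * p) := by
  rw [moment_succ, Fin.sum_univ_two, ← sub_sub]
  rfl

theorem pderiv_pderiv_moment (i j : Fin 2) (m : ℕ) (p : MvPolynomial (Fin 3) k) :
    pderiv i (pderiv j (moment φ (m + 2) p)) =
      (m + 2) * (m + 1) * moment φ m (X i.castSucc * (X j.castSucc * p)) := by
  have hC : (-(((m + 1 : ℕ) : MvPolynomial (Fin 2) k) + 1)) = C (-((m + 1 : ℕ) + 1 : k)) := by simp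
  rw [pderiv_moment_succ, hC, pderiv_C_mul, pderiv_moment_succ, ← hC]
  push_cast
  ring

theorem isHessianKernel_moment {w : Fin 3 → MvPolynomial (Fin 2) k}
    (h : ∀ i, ∑ j, w j * moment φ d (X j * X i) = 0) :
    IsHessianKernel (d + 1) (moment φ (d + 2) 1) (w 2) (w 0 + X 0 * w 2) (w 1 + X 1 * w 2) := by
  have hker (i) : (w 0 + X 0 * w 2) * moment φ d (X 0 * X i) +
      (w 1 + X 1 * w 2) * moment φ d (X 1 * X i) = -w 2 * moment φ (d + 1) (X i) := by
    have hi := h i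
    rw [Fin.sum_univ_three] at hi
    linear_combination hi + w 2 * moment_succ_fin_three (φ := φ) d (X i)
  have hpderiv (i : Fin 2) := pderiv_moment_succ φ i (d + 1) 1
  have hpderiv2 (i j : Fin 2) := pderiv_pderiv_moment (φ := φ) i j d 1
  simp only [mul_one, Nat.cast_add, Nat.cast_one] at hpderiv hpderiv2
  have hcomm : (X 1 * X 0 : MvPolynomial (Fin 3) k) = X 0 * X 1 := mul_comm _ _
  have hker0 := hker 0
  rw [hcomm] at hker0
  refine ⟨?_, ?_, ?_⟩ <;> rw [Nat.cast_add, Nat.cast_one]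
  · simp only [hpderiv, Fin.castSucc_zero, Fin.castSucc_one]
    have hF := moment_succ_fin_three (φ := φ) (d + 1) 1
    have hF0 := moment_succ_fin_three (φ := φ) d (X 0)
    have hF1 := moment_succ_fin_three (φ := φ) d (X 1)
    rw [mul_comm (X 2)] at hF0 hF1
    rw [hcomm] at hF0
    simp only [mul_one] at hF
    linear_combination -((d : MvPolynomial (Fin 2) k) + 2) *
      ((w 0 + X 0 * w 2) * hF0 + (w 1 + X 1 * w 2) * hF1 + hker 2 - X 0 * hker0 - X 1 * hker 1 +
        w 2 * hF)
  · simp only [hpderiv2]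
    simp only [hpderiv, Fin.castSucc_zero, Fin.castSucc_one]
    linear_combination ((d : MvPolynomial (Fin 2) k) + 2) * (d + 1) * hker0
  · simp only [hpderiv2]
    simp only [hpderiv, Fin.castSucc_zero, Fin.castSucc_one]
    linear_combination ((d : MvPolynomial (Fin 2) k) + 2) * (d + 1) * hker 1

variable [CharZero k]

theorem exists_forall_apply_mul_eq_zero_of_cone {a b κ : k}
    (h : (C κ * X 0 + C a) * pderiv 0 (moment φ (d + 1) 1) +
      (C κ * X 1 + C b) * pderiv 1 (moment φ (d + 1) 1) =
        ((d : MvPolynomial (Fin 2) k) + 1) * C κ * moment φ (d + 1) 1)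
    {p : MvPolynomial (Fin 3) k} (hp : p.IsHomogeneous d) :
    φ (p * ∑ i, C (![a, b, κ] i) * X i) = 0 := by
  refine apply_mul_eq_zero_of_moment_eq_zero ?_ hp
  have hsmul (c : k) (q : MvPolynomial (Fin 3) k) : moment φ d (C c * q) = C c * moment φ d q := by
    rw [C_mul', map_smul, smul_eq_C_mul]
  have hF := moment_succ_fin_three (φ := φ) d 1
  rw [pderiv_moment_succ, pderiv_moment_succ] at h
  simp only [Fin.castSucc_zero, Fin.castSucc_one, mul_one] at h hF
  have hd : ((d : MvPolynomial (Fin 2) k) + 1) ≠ 0 := Nat.cast_add_one_ne_zero d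
  refine (mul_eq_zero.1 ?_).resolve_left hd
  simp only [Fin.sum_univ_three, map_add, hsmul, cons_val]
  linear_combination -h - (d + 1) * C κ * hF

theorem exists_linear_form_of_sum_mul_moment_eq_zero (hF : moment φ (d + 2) 1 ≠ 0)
    {w : Fin 3 → MvPolynomial (Fin 2) k} (hw : w ≠ 0)
    (h : ∀ i, ∑ j, w j * moment φ d (X j * X i) = 0) :
    ∃ a : Fin 3 → k, a ≠ 0 ∧ ∀ p : MvPolynomial (Fin 3) k, p.IsHomogeneous (d + 1) →
      φ (p * ∑ i, C (a i) * X i) = 0 := by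
  have hker := isHessianKernel_moment h
  have hpq : w 0 + X 0 * w 2 ≠ 0 ∨ w 1 + X 1 * w 2 ≠ 0 := by
    by_contra! hpq
    have hself := hker.along_self
    rw [hpq.1, hpq.2, zero_mul, zero_mul, zero_add, eq_comm, mul_eq_zero, or_iff_left hF,
      mul_eq_zero, or_iff_right (Nat.cast_add_one_ne_zero _)] at hself
    rw [hself, mul_zero, mul_zero, add_zero, add_zero] at hpq
    exact hw (funext (Fin.forall_fin_succ.2 ⟨hpq.1, Fin.forall_fin_two.2 ⟨hpq.2, hself⟩⟩))
  obtain ⟨a, b, κ, hne, hcone⟩ := hker.exists_cone hpq (totalDegree_moment_le φ _ _)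
  exact ⟨_, hne, fun p hp => exists_forall_apply_mul_eq_zero_of_cone hcone hp⟩

variable {f : Fin 3 → MvPolynomial (Fin 3) k} {e : ℕ}

theorem IsDualSocleGenerator.nondegenerate_one
    (hφ : IsDualSocleGenerator (Ideal.span (Set.range f)) (3 * e) φ) (hrad : VarsMemRadical f)
    (hf : ∀ i, (f i).IsHomogeneous (e + 1)) (he : 0 < e) :
    (formPairing (_root_.extendScalars (MvPolynomial (Fin 2) k) φ)
      (hyperplane X ^ (3 * e - 2)) 1).Nondegenerate := by
  refine formPairing_nondegenerate_iff.2 fun u hu h => ?_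
  obtain ⟨d, hd⟩ : ∃ d, 3 * e = d + 2 := ⟨3 * e - 2, by omega⟩
  rw [hd, Nat.add_sub_cancel] at h
  obtain ⟨w, rfl⟩ := exists_eq_sum_C_mul_X hu
  have hw (i) : ∑ j, w j * moment φ d (X j * X i) = 0 := by
    rw [← h (X i) (isHomogeneous_X _ i), Finset.sum_mul, Finset.mul_sum, map_sum]
    refine Finset.sum_congr rfl fun j _ => ?_
    rw [mul_assoc, mul_left_comm, C_mul', map_smul, smul_eq_mul, moment_apply,
      RingHom.map_mul (MvPolynomial.map _), map_X, map_X]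
  by_contra hne
  have hw0 : w ≠ 0 := by
    rintro rfl
    simp at hne
  obtain ⟨a, ha, hφa⟩ :=
    exists_linear_form_of_sum_mul_moment_eq_zero (hd ▸ hφ.moment_one_ne_zero) hw0 hw
  have hlin : (∑ i, C (a i) * X i : MvPolynomial (Fin 3) k).IsHomogeneous 1 :=
    .sum _ _ _ fun i _ => (isHomogeneous_X k i).C_mul _
  have hmem := hφ.mem_of_forall_apply_mul_eq_zero hrad hf (d' := d + 1) (by omega) hlin
    fun v hv => by rw [mul_comm, hφa v hv]
  have hzero := eq_zero_of_mem_pow_idealOfVars (span_le_pow_idealOfVars hf hmem)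
    (hlin.totalDegree_le.trans_lt (by omega))
  refine ha (funext fun i => ?_)
  simpa [Pi.single_apply] using congrArg (eval (Pi.single i 1)) hzero

end DegreeOne

section DegreeTwo

open Fintype (linearCombination)

theorem extendScalars_map_mul_eq_zero {k A B σ : Type*} [CommRing k] [CommRing A] [CommRing B]
    [Algebra k A] [Algebra k B] {φ : MvPolynomial σ k →ₗ[k] k} (g : A →ₐ[k] B)
    {u : MvPolynomial σ A} {d : ℕ}
    (h : ∀ v : MvPolynomial σ A, v.IsHomogeneous d → extendScalars A φ (u * v) = 0)
    {v : MvPolynomial σ B} (hv : v.IsHomogeneous d) :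
    extendScalars B φ (MvPolynomial.map (g : A →+* B) u * v) = 0 := by
  rw [v.as_sum, Finset.mul_sum, map_sum]
  refine Finset.sum_eq_zero fun m hm => ?_
  have hmonomial : monomial m (coeff m v) =
      coeff m v • MvPolynomial.map (g : A →+* B) (monomial m 1) := by
    rw [map_monomial, smul_monomial, map_one, smul_eq_mul, mul_one]
  have hdeg : m.degree = d := (hv.degree_eq_sum_deg_support hm).symm
  rw [hmonomial, mul_smul_comm, map_smul, ← RingHom.map_mul (MvPolynomial.map _),
    ← map_extendScalars, h _ (isHomogeneous_monomial 1 hdeg), map_zero, smul_zero]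

theorem ParameterFrame.eq_zero_of_hyperplane_sq_mul_mem {k K : Type*} [Field k] [Field K]
    [Algebra k K] [CharZero K] (P : ParameterFrame k K 2) {f : Fin 3 → MvPolynomial (Fin 3) K}
    {e : ℕ} (hrad : VarsMemRadical f) (hf : ∀ l, (f l).IsHomogeneous (e + 1)) (he : 2 ≤ e)
    (hconst : ∀ i l, coeffDerivation (P.deriv i) (f l) = 0) {q : MvPolynomial (Fin 3) K}
    (hq : q.IsHomogeneous e) (h : hyperplane P.coord ^ 2 * q ∈ Ideal.span (Set.range f)) :
    q = 0 := by
  have hdeg : (hyperplane P.coord ^ 2 * q).IsHomogeneous (1 + (e + 1)) := by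
    convert ((isHomogeneous_hyperplane P.coord).pow 2).mul hq using 1
    ring
  obtain ⟨w, hw, hwq⟩ := exists_isHomogeneous_dotProduct hf hdeg h
  choose a ha using fun l => exists_eq_sum_C_mul_X (hw l)
  refine P.eq_zero_of_linear_relation
    (B := fun j l => a l j.castSucc + P.coord j * a l (Fin.last 2))
    (s := fun l => a l (Fin.last 2)) hrad hf (by omega) hconst ?_
  rw [← hwq]
  simp only [linearCombination_eq_dotProduct, dotProduct, ha, hyperplane, Fin.sum_univ_three,
    Fin.sum_univ_two, map_add, map_mul, Fin.castSucc_zero, Fin.castSucc_one, Fin.reduceLast]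
  ring

variable {k : Type*} [Field k] [CharZero k] {f : Fin 3 → MvPolynomial (Fin 3) k}
  {φ : MvPolynomial (Fin 3) k →ₗ[k] k}

theorem IsDualSocleGenerator.nondegenerate_two
    (hφ : IsDualSocleGenerator (Ideal.span (Set.range f)) 6 φ) (hrad : VarsMemRadical f)
    (hf : ∀ i, (f i).IsHomogeneous 3) :
    (formPairing (_root_.extendScalars (MvPolynomial (Fin 2) k) φ)
      (hyperplane X ^ 2) 2).Nondegenerate := by
  refine formPairing_nondegenerate_iff.2 fun q hq h => ?_
  let S := MvPolynomial (Fin 2) k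
  let K := FractionRing S
  let ι := IsScalarTower.toAlgHom k S K
  have hι : Function.Injective ι := IsFractionRing.injective S K
  have : CharZero K := algebraRat.charZero K
  have hradK : VarsMemRadical fun i => MvPolynomial.map (algebraMap k K) (f i) :=
    hrad.map _ fun j => ⟨j, map_X _ j⟩
  have hfK (i) : (MvPolynomial.map (algebraMap k K) (f i)).IsHomogeneous (2 + 1) := (hf i).map _
  have hLq : (hyperplane X ^ 2 * q).IsHomogeneous 4 := ((isHomogeneous_hyperplane X).pow 2).mul hq
  have hmem := hφ.extendScalars.mem_of_forall_apply_mul_eq_zero hradK hfK (d' := 2) rfl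
    (hLq.map (ι : S →+* K)) fun v hv => extendScalars_map_mul_eq_zero ι
      (fun p hp => by rw [mul_assoc]; exact h p hp) hv
  rw [RingHom.map_mul (MvPolynomial.map _), RingHom.map_pow (MvPolynomial.map _),
    map_hyperplane] at hmem
  refine map_injective (ι : S →+* K) hι ?_
  rw [(rationalFrame k 2).eq_zero_of_hyperplane_sq_mul_mem hradK hfK le_rfl
    (fun _ _ => coeffDerivation_map_algebraMap _ _) (hq.map _) hmem, map_zero]

end DegreeTwo

theorem varsMemRadical_of_forall_exists_eval_ne_zero {k σ : Type*} [Field k] [IsAlgClosed k]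
    [Finite σ] {f : Fin 3 → MvPolynomial σ k} (h : ∀ x : σ → k, x ≠ 0 → ∃ i, eval x (f i) ≠ 0) :
    VarsMemRadical f := fun i => by
  rw [← vanishingIdeal_zeroLocus_eq_radical (K := k)]
  intro x hx
  by_cases hx0 : x = 0
  · simp [hx0]
  · obtain ⟨j, hj⟩ := h x hx0
    exact absurd (hx (f j) (Ideal.subset_span ⟨j, rfl⟩)) (by simpa [aeval_eq_eval] using hj)

theorem exists_nondegenerate_hyperplane {k : Type*} [Field k] [CharZero k] {n : ℕ} {ι : Type*}
    [Finite ι] {φ : MvPolynomial (Fin (n + 1)) k →ₗ[k] k} {m i : ι → ℕ}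
    (h : ∀ j, (formPairing (extendScalars (MvPolynomial (Fin n) k) φ)
      (hyperplane X ^ m j) (i j)).Nondegenerate) :
    ∃ c : Fin n → k, ∀ j, (formPairing φ (hyperplane c ^ m j) (i j)).Nondegenerate := by
  have := Fintype.ofFinite ι
  choose D hD hnondeg using fun j => formPairing_nondegenerate_of_map (B := k) φ (h j)
  obtain ⟨c, hc⟩ : ∃ c, eval c (∏ j, D j) ≠ 0 := by
    by_contra! hzero
    exact Finset.prod_ne_zero_iff.2 (fun j _ => hD j) (MvPolynomial.funext (by simpa using hzero))
  refine ⟨c, fun j => ?_⟩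
  have hcj : aeval c (D j) ≠ 0 := by
    rw [map_prod, Finset.prod_ne_zero_iff] at hc
    exact hc j (Finset.mem_univ j)
  have := hnondeg j (aeval c) hcj
  rw [extendScalars_self, RingHom.map_pow (MvPolynomial.map _), map_hyperplane] at this
  convert this
  ext l
  simp

theorem milnor_algebra_smooth_quartic_curve_SLP_general (f : Fin 3 → MvPolynomial (Fin 3) ℂ)
    (hf : ∀ i, (f i).IsHomogeneous 3) (hsm : ∀ x : Fin 3 → ℂ, x ≠ 0 → ∃ i, eval x (f i) ≠ 0) :
    hasSLPQuot (Ideal.span (Set.range f)) 6 := by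
  have hrad := varsMemRadical_of_forall_exists_eval_ne_zero hsm
  obtain ⟨φ, hφ⟩ := hrad.exists_isDualSocleGenerator (e := 2) hf
  obtain ⟨c, hc⟩ := exists_nondegenerate_hyperplane (φ := φ) (m := ![6, 4, 2]) (i := ![0, 1, 2])
    (Fin.forall_fin_succ.2 ⟨hφ.nondegenerate_zero, Fin.forall_fin_two.2
      ⟨hφ.nondegenerate_one hrad hf two_pos, hφ.nondegenerate_two hrad hf⟩⟩)
  refine hasSLPQuot_of_nondegenerate hφ hrad hf (isHomogeneous_hyperplane c) fun i hi => ?_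
  replace hi : i < 3 := by omega
  interval_cases i
  exacts [hc 0, hc 1, hc 2]

/-- **Proposition.** For any smooth quartic curve `V(f) ⊂ ℙ^2`, the Milnor algebra
`M(f) = R/J(f)` (an Artinian Gorenstein algebra of socle degree `3(4-2) = 6`)
has the Strong Lefschetz Property. -/
theorem milnor_algebra_smooth_quartic_curve_SLP
    (f : MvPolynomial (Fin 3) ℂ) (hf : f.IsHomogeneous 4)
    (hsm : ∀ x : Fin 3 → ℂ, x ≠ 0 → ∃ i : Fin 3, eval x (pderiv i f) ≠ 0) :
    hasSLPQuot (jacobianIdeal f) 6 :=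
  milnor_algebra_smooth_quartic_curve_SLP_general (fun i => pderiv i f) (fun _ => hf.pderiv) hsm
end

section
/- Let n ≥ 1, d ≥ 2 and 1 ≤ k ≤ d/2. There exists a nonempty Zariski-open subset U_{d,k} of R_d = ℂ[x_0,…,x_n]_d such that for every f ∈ U_{d,k}: dim_ℂ M^k(f)_i = C(n+i, n) for all i < d−k, and dim_ℂ M^k(f)_{d−k} = C(n+d−k, n) − C(n+k, n). -/
/-! The partials `∂^α f`, `|α| = k`, of a form `f` of degree `d` are forms of degree `d - k`, so
`J^k(f)` vanishes below degree `d - k`, and in degree `d - k` it is their linear span. It therefore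
suffices that, for `f` outside a hypersurface, these partials are linearly independent.

On the normalized coefficients `β! · coeff β f` the operator `∂^α` acts as the shift `β ↦ α + β`, so
the partials are independent as soon as some square matrix of normalized coefficients at
`α + α' + ε`, `|α| = |α'| = k`, with `|ε| = d - 2k` fixed, is invertible; its determinant cuts out
the hypersurface.

The determinant is nonzero at the form `(∑ p, (∑ i, p i * x i) ^ d) / d!`, where `p` runs over the
grid `{1, …, k+1}^{n+1}`: its normalized coefficients are the moments `∑ p, p^γ`, so its matrix is
`Vᴴ D V`, where `D` is the positive diagonal matrix of the `p^ε` and the columns of `V` are the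
monomials of degree `k` on the grid. As a form of degree `k` vanishing on the grid is zero, `V` is
injective and `Vᴴ D V` is positive definite. -/

open MvPolynomial Module

/-- The differential operator `∂^α` on `ℂ[x_0,…,x_{N-1}]` given by a multi-index
`α : Fin N → ℕ`. -/
noncomputable def pd {N : ℕ} (α : Fin N → ℕ) :
    Module.End ℂ (MvPolynomial (Fin N) ℂ) :=
  (List.ofFn fun i =>
    ((MvPolynomial.pderiv (R := ℂ) i).toLinearMap :
      Module.End ℂ (MvPolynomial (Fin N) ℂ)) ^ (α i)).prod

/-- The `k`-th order Jacobian ideal `J^k(f)`, generated by all partial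
derivatives `∂^α f` with `|α| = k`. -/
noncomputable def milnorIdeal {N : ℕ} (f : MvPolynomial (Fin N) ℂ) (k : ℕ) :
    Ideal (MvPolynomial (Fin N) ℂ) :=
  Ideal.span {g | ∃ α : Fin N → ℕ, (∑ i, α i) = k ∧ g = pd α f}

section HomogeneousParts

variable {σ R : Type*} [CommSemiring R] {e m : ℕ}

lemma homogeneousComponent_mul_of_lt (a : MvPolynomial σ R) {g : MvPolynomial σ R}
    (hg : g.IsHomogeneous e) (hm : m < e) : homogeneousComponent m (a * g) = 0 := by
  let := gradedAlgebra (σ := σ) (R := R)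
  rw [← decomposition.decompose'_apply]
  exact DirectSum.coe_decompose_mul_of_right_mem_of_not_le (homogeneousSubmodule σ R) hg hm.not_ge

lemma homogeneousComponent_mul_of_isHomogeneous (a : MvPolynomial σ R) {g : MvPolynomial σ R}
    (hg : g.IsHomogeneous e) : homogeneousComponent e (a * g) = coeff 0 a • g := by
  let := gradedAlgebra (σ := σ) (R := R)
  have h := DirectSum.coe_decompose_mul_of_right_mem_of_le (homogeneousSubmodule σ R)
    (a := a) hg le_rfl
  rw [Nat.sub_self] at h
  rw [smul_eq_C_mul, ← homogeneousComponent_zero, ← decomposition.decompose'_apply,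
    ← decomposition.decompose'_apply]
  exact h

variable {S : Set (MvPolynomial σ R)}

lemma homogeneousSubmodule_inf_idealSpan_eq_bot (hS : ∀ g ∈ S, g.IsHomogeneous e) (hm : m < e) :
    homogeneousSubmodule σ R m ⊓ (Ideal.span S).restrictScalars R = ⊥ := by
  rw [eq_bot_iff]
  rintro x ⟨hx, hxS⟩
  obtain ⟨r, a, g, rfl⟩ := Submodule.mem_span_set'.1 hxS
  rw [Submodule.mem_bot, ← homogeneousComponent_eq_self hx, map_sum]
  exact Finset.sum_eq_zero fun j _ => homogeneousComponent_mul_of_lt _ (hS _ (g j).2) hm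

lemma homogeneousSubmodule_inf_idealSpan_eq_span (hS : ∀ g ∈ S, g.IsHomogeneous e) :
    homogeneousSubmodule σ R e ⊓ (Ideal.span S).restrictScalars R = Submodule.span R S := by
  apply le_antisymm
  · rintro x ⟨hx, hxS⟩
    obtain ⟨r, a, g, rfl⟩ := Submodule.mem_span_set'.1 hxS
    rw [← homogeneousComponent_eq_self hx, map_sum]
    refine Submodule.sum_mem _ fun j _ => ?_
    rw [smul_eq_mul, homogeneousComponent_mul_of_isHomogeneous _ (hS _ (g j).2)]
    exact Submodule.smul_mem _ _ (Submodule.subset_span (g j).2)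
  · exact le_inf (Submodule.span_le.2 hS) (Submodule.span_le_restrictScalars R _ S)

end HomogeneousParts

lemma finrank_map_add_finrank_inf_ker {K V W : Type*} [DivisionRing K] [AddCommGroup V] [Module K V]
    [AddCommGroup W] [Module K W] (φ : V →ₗ[K] W) (p : Submodule K V) [FiniteDimensional K p] :
    finrank K (p.map φ) + finrank K ↥(p ⊓ LinearMap.ker φ) = finrank K p := by
  rw [← (φ.domRestrict p).finrank_range_add_finrank_ker, LinearMap.range_domRestrict,
    LinearMap.ker_domRestrict, ← Submodule.map_comap_subtype, Submodule.finrank_map_subtype_eq]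

lemma finrank_gradedPiece_add {N : ℕ} (I : Ideal (MvPolynomial (Fin N) ℂ)) (m : ℕ) :
    finrank ℂ (gradedPiece I m) +
        finrank ℂ ↥(homogeneousSubmodule (Fin N) ℂ m ⊓ I.restrictScalars ℂ) =
      finrank ℂ (homogeneousSubmodule (Fin N) ℂ m) := by
  have : FiniteDimensional ℂ (homogeneousSubmodule (Fin N) ℂ m) :=
    Module.Finite.iff_fg.2 (homogeneousSubmodule_fg (Fin N) ℂ m)
  have hker : LinearMap.ker (Ideal.Quotient.mkₐ ℂ I).toLinearMap = I.restrictScalars ℂ := by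
    ext x
    exact Ideal.Quotient.eq_zero_iff_mem
  rw [← hker]
  exact finrank_map_add_finrank_inf_ker _ _

section Exponents

/-- The exponents of the monomials of degree `m` in variables indexed by `σ`. -/
def homogeneousExponents (σ : Type*) [Fintype σ] [DecidableEq σ] (m : ℕ) : Finset (σ →₀ ℕ) :=
  Finset.univ.finsuppAntidiag m

variable {σ : Type*} [Fintype σ] [DecidableEq σ] {m : ℕ}

lemma mem_homogeneousExponents {β : σ →₀ ℕ} : β ∈ homogeneousExponents σ m ↔ β.degree = m := by
  simp [homogeneousExponents, Finset.mem_finsuppAntidiag, Finsupp.degree_eq_sum]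

lemma card_homogeneousExponents_fin (n m : ℕ) :
    (homogeneousExponents (Fin (n + 1)) m).card = (n + m).choose n := by
  rw [homogeneousExponents, Finset.card_finsuppAntidiag_nat_eq_choose, Finset.card_fin,
    Nat.add_right_comm, Nat.add_sub_cancel, Nat.choose_symm_add]

lemma finrank_homogeneousSubmodule (R : Type*) [CommSemiring R] [StrongRankCondition R] (m : ℕ) :
    finrank R (homogeneousSubmodule σ R m) = (homogeneousExponents σ m).card := by
  have hsupp : homogeneousSubmodule σ R m = restrictSupport R (homogeneousExponents σ m) := by
    rw [homogeneousSubmodule_eq_finsupp_supported]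
    congr 1
    ext β
    exact mem_homogeneousExponents.symm
  rw [hsupp, finrank_eq_nat_card_basis (basisRestrictSupport R _)]
  exact Nat.card_eq_finsetCard _

end Exponents

section NormalizedCoeff

variable {σ : Type*} [Fintype σ]

/-- The multi-index factorial `β! = ∏ i, (β i)!`. -/
def exponentFactorial (β : σ →₀ ℕ) : ℕ := ∏ i, (β i).factorial

lemma exponentFactorial_ne_zero (β : σ →₀ ℕ) : exponentFactorial β ≠ 0 :=
  Finset.prod_ne_zero_iff.2 fun i _ => (β i).factorial_ne_zero

lemma exponentFactorial_add_single (β : σ →₀ ℕ) (i : σ) :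
    exponentFactorial (β + Finsupp.single i 1) = (β i + 1) * exponentFactorial β := by
  classical
  have hfactor (j : σ) : ((β + Finsupp.single i 1 : σ →₀ ℕ) j).factorial =
      (if i = j then β j + 1 else 1) * (β j).factorial := by
    by_cases hij : i = j <;> simp [hij, Nat.factorial_succ]
  simp only [exponentFactorial, hfactor, Finset.prod_mul_distrib, Finset.prod_ite_eq,
    Finset.mem_univ, if_true]

variable {R : Type*} [CommSemiring R]

/-- The normalized coefficient `β! · coeff β f`, the value at the origin of `∂^β f`. -/
noncomputable def normalizedCoeff (β : σ →₀ ℕ) : MvPolynomial σ R →ₗ[R] R :=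
  (exponentFactorial β : R) • lcoeff R β

lemma normalizedCoeff_apply (β : σ →₀ ℕ) (f : MvPolynomial σ R) :
    normalizedCoeff β f = exponentFactorial β * coeff β f := rfl

lemma normalizedCoeff_ne_zero_iff [NoZeroDivisors R] [CharZero R] {β : σ →₀ ℕ}
    {f : MvPolynomial σ R} : normalizedCoeff β f ≠ 0 ↔ coeff β f ≠ 0 := by
  rw [normalizedCoeff_apply,
    mul_ne_zero_iff_left (Nat.cast_ne_zero.2 (exponentFactorial_ne_zero β))]

lemma normalizedCoeff_pderiv (β : σ →₀ ℕ) (i : σ) (f : MvPolynomial σ R) :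
    normalizedCoeff β (pderiv i f) = normalizedCoeff (β + Finsupp.single i 1) f := by
  rw [normalizedCoeff_apply, normalizedCoeff_apply, coeff_pderiv, exponentFactorial_add_single]
  push_cast
  ring

lemma normalizedCoeff_pderiv_pow (β : σ →₀ ℕ) (i : σ) (a : ℕ) (f : MvPolynomial σ R) :
    normalizedCoeff β (((pderiv i).toLinearMap ^ a : Module.End R (MvPolynomial σ R)) f) =
      normalizedCoeff (β + Finsupp.single i a) f := by
  induction a generalizing β with
  | zero => simp
  | succ a ih =>
    rw [pow_succ', Module.End.mul_apply, Derivation.coeFn_coe, normalizedCoeff_pderiv, ih,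
      add_assoc, ← Finsupp.single_add, add_comm 1 a]

lemma normalizedCoeff_list_prod_pderiv_pow (α : σ → ℕ) (l : List σ) (β : σ →₀ ℕ)
    (f : MvPolynomial σ R) :
    normalizedCoeff β ((l.map fun i =>
        ((pderiv i).toLinearMap ^ α i : Module.End R (MvPolynomial σ R))).prod f) =
      normalizedCoeff (β + (l.map fun i => Finsupp.single i (α i)).sum) f := by
  induction l generalizing β with
  | nil => simp
  | cons i l ih =>
    simp only [List.map_cons, List.prod_cons, List.sum_cons, Module.End.mul_apply,
      normalizedCoeff_pderiv_pow, ih, add_assoc]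

lemma exists_isHomogeneous_normalizedCoeff_eq {K : Type*} [Field K] [CharZero K] (d : ℕ)
    (a : (σ →₀ ℕ) → K) :
    ∃ f : MvPolynomial σ K, f.IsHomogeneous d ∧
      ∀ γ : σ →₀ ℕ, γ.degree = d → normalizedCoeff γ f = a γ := by
  classical
  refine ⟨∑ γ ∈ homogeneousExponents σ d, monomial γ (a γ / exponentFactorial γ),
    IsHomogeneous.sum _ _ _ fun γ hγ => isHomogeneous_monomial _ (mem_homogeneousExponents.1 hγ),
    fun γ hγ => ?_⟩
  have hfactorial : (exponentFactorial γ : K) ≠ 0 :=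
    Nat.cast_ne_zero.2 (exponentFactorial_ne_zero γ)
  simp only [normalizedCoeff_apply, coeff_sum, coeff_monomial, Finset.sum_ite_eq',
    mem_homogeneousExponents.2 hγ, if_true, mul_div_cancel₀ _ hfactorial]

end NormalizedCoeff

lemma eq_zero_of_eval_grid_eq_zero {σ R : Type*} [Finite σ] [CommRing R] [IsDomain R] [CharZero R]
    {k : ℕ} {g : MvPolynomial σ R} (hg : ∀ i, g.degreeOf i ≤ k)
    (h : ∀ p : σ → Fin (k + 1), eval (fun i => ((p i + 1 : ℕ) : R)) g = 0) : g = 0 := by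
  let node : Fin (k + 1) ↪ R := ⟨fun j => ((j + 1 : ℕ) : R), fun j j' hj => by
    simpa [Fin.ext_iff] using hj⟩
  refine eq_zero_of_eval_zero_at_prod_finset g (fun _ => Finset.univ.map node) (fun i => ?_)
    fun x hx => ?_
  · rw [Finset.card_map, Finset.card_fin]
    exact Nat.lt_succ_of_le (hg i)
  · choose p _ hp using fun i => Finset.mem_map.1 (hx i)
    rw [← funext hp]
    exact h p

section CatalecticantMinor

variable {σ : Type*} [Fintype σ] [DecidableEq σ]

/-- For a form `f` of degree `2k + |ε|`, the square submatrix of the `k`-th catalecticant matrix of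
`f` with rows `α` and columns `α' + ε`, where `α` and `α'` run over the exponents of degree `k`. -/
noncomputable def catalecticantMinor {R : Type*} [CommSemiring R] (k : ℕ) (ε : σ →₀ ℕ)
    (f : MvPolynomial σ R) : Matrix (homogeneousExponents σ k) (homogeneousExponents σ k) R :=
  Matrix.of fun α α' => normalizedCoeff (α'.1 + ε + α.1) f

/-- The matrix `catalecticantMinor` of the generic polynomial, whose coefficients are the
variables. -/
noncomputable def genericCatalecticantMinor (R : Type*) [CommSemiring R] (k : ℕ) (ε : σ →₀ ℕ) :
    Matrix (homogeneousExponents σ k) (homogeneousExponents σ k) (MvPolynomial (σ →₀ ℕ) R) :=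
  Matrix.of fun α α' => (exponentFactorial (α'.1 + ε + α.1) : MvPolynomial (σ →₀ ℕ) R) *
    X (α'.1 + ε + α.1)

lemma eval_coeff_det_genericCatalecticantMinor {R : Type*} [CommRing R] (k : ℕ) (ε : σ →₀ ℕ)
    (f : MvPolynomial σ R) :
    eval (fun γ => f.coeff γ) (genericCatalecticantMinor R k ε).det =
      (catalecticantMinor k ε f).det := by
  rw [RingHom.map_det]
  congr 1
  ext α α'
  simp [genericCatalecticantMinor, catalecticantMinor, normalizedCoeff_apply]

/-- The matrix of values of the monomials of degree `k` at the points of the grid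
`{1, …, k+1}^σ`; the index `p` stands for the point with coordinates `p i + 1`. -/
def gridEvaluationMatrix (σ R : Type*) [Fintype σ] [DecidableEq σ] [CommSemiring R] (k : ℕ) :
    Matrix (σ → Fin (k + 1)) (homogeneousExponents σ k) R :=
  Matrix.of fun p α => ∏ i, ((p i + 1 : ℕ) : R) ^ (α : σ →₀ ℕ) i

lemma gridEvaluationMatrix_mulVec_injective (R : Type*) [CommRing R] [IsDomain R] [CharZero R]
    (k : ℕ) : Function.Injective (gridEvaluationMatrix σ R k).mulVec := by
  rw [← Matrix.coe_mulVecLin, injective_iff_map_eq_zero]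
  intro c hc
  let g : MvPolynomial σ R := ∑ α, monomial α.1 (c α)
  have hg : g.IsHomogeneous k := IsHomogeneous.sum _ _ _ fun α _ =>
    isHomogeneous_monomial _ (mem_homogeneousExponents.1 α.2)
  have hg0 : g = 0 := by
    refine eq_zero_of_eval_grid_eq_zero
      (fun i => (degreeOf_le_totalDegree g i).trans hg.totalDegree_le) fun p => ?_
    refine Eq.trans ?_ (congrFun hc p)
    simp [g, gridEvaluationMatrix, Matrix.mulVec, dotProduct, eval_monomial, Finsupp.prod_fintype,
      mul_comm]
  ext α
  simpa [g, coeff_sum, coeff_monomial, Subtype.coe_inj] using congrArg (coeff α.1) hg0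

open ComplexOrder Matrix in
lemma exists_isHomogeneous_det_catalecticantMinor_ne_zero (𝕜 : Type*) [RCLike 𝕜] (k : ℕ)
    (ε : σ →₀ ℕ) :
    ∃ f : MvPolynomial σ 𝕜, f.IsHomogeneous (2 * k + ε.degree) ∧
      (catalecticantMinor k ε f).det ≠ 0 := by
  let V := gridEvaluationMatrix σ 𝕜 k
  let weight (p : σ → Fin (k + 1)) : 𝕜 := ∏ i, ((p i + 1 : ℕ) : 𝕜) ^ ε i
  have hweight (p) : 0 < weight p := Finset.prod_pos fun i _ => by positivity
  have hposDef : (Vᴴ * diagonal weight * V).PosDef :=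
    (Matrix.PosDef.diagonal hweight).conjTranspose_mul_mul_same
      (gridEvaluationMatrix_mulVec_injective 𝕜 k)
  obtain ⟨f, hf, hmoment⟩ := exists_isHomogeneous_normalizedCoeff_eq (2 * k + ε.degree)
    fun γ : σ →₀ ℕ => ∑ p : σ → Fin (k + 1), ∏ i, ((p i + 1 : ℕ) : 𝕜) ^ γ i
  refine ⟨f, hf, ?_⟩
  have hf_eq : catalecticantMinor k ε f = Vᴴ * diagonal weight * V := by
    ext α α'
    have hdeg : (α'.1 + ε + α.1).degree = 2 * k + ε.degree := by
      rw [map_add, map_add, mem_homogeneousExponents.1 α.2, mem_homogeneousExponents.1 α'.2]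
      ring
    rw [catalecticantMinor, of_apply, hmoment _ hdeg, mul_apply]
    refine Finset.sum_congr rfl fun p _ => ?_
    simp only [V, weight, gridEvaluationMatrix, mul_diagonal, conjTranspose_apply, of_apply,
      star_prod, star_pow, star_natCast, Finsupp.add_apply, pow_add, Finset.prod_mul_distrib]
    ring
  rw [hf_eq]
  exact hposDef.det_pos.ne'

end CatalecticantMinor

section MilnorAlgebra

variable {N d k : ℕ} {f : MvPolynomial (Fin N) ℂ}

lemma normalizedCoeff_pd (α β : Fin N →₀ ℕ) (f : MvPolynomial (Fin N) ℂ) :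
    normalizedCoeff β (pd α f) = normalizedCoeff (β + α) f := by
  rw [pd, List.ofFn_eq_map, normalizedCoeff_list_prod_pderiv_pow, ← List.ofFn_eq_map,
    List.sum_ofFn, Finsupp.univ_sum_single α]

lemma isHomogeneous_pd (hf : f.IsHomogeneous d) (α : Fin N →₀ ℕ) :
    (pd α f).IsHomogeneous (d - α.degree) := by
  intro β hβ
  rw [← normalizedCoeff_ne_zero_iff, normalizedCoeff_pd, normalizedCoeff_ne_zero_iff] at hβ
  have hdeg : (β + α).degree = d := by
    by_contra hne
    exact hβ (hf.coeff_eq_zero hne)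
  rw [map_add] at hdeg
  exact (DFunLike.congr_fun Finsupp.degree_eq_weight_one β).symm.trans (Nat.eq_sub_of_add_eq hdeg)

lemma linearIndependent_pd_of_det_catalecticantMinor_ne_zero {ε : Fin N →₀ ℕ}
    (hdet : (catalecticantMinor k ε f).det ≠ 0) :
    LinearIndependent ℂ fun α : homogeneousExponents (Fin N) k => pd α f := by
  let readOff : MvPolynomial (Fin N) ℂ →ₗ[ℂ] homogeneousExponents (Fin N) k → ℂ :=
    LinearMap.pi fun α' => normalizedCoeff (α' + ε)
  have hrow : readOff ∘ (fun α : homogeneousExponents (Fin N) k => pd α f) =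
      (catalecticantMinor k ε f).row := by
    ext α α'
    exact normalizedCoeff_pd α.1 (α'.1 + ε) f
  exact .of_comp readOff (hrow ▸ Matrix.linearIndependent_rows_of_det_ne_zero hdet)

lemma milnorIdeal_eq_span_range (f : MvPolynomial (Fin N) ℂ) (k : ℕ) :
    milnorIdeal f k =
      Ideal.span (Set.range fun α : homogeneousExponents (Fin N) k => pd α f) := by
  rw [milnorIdeal]
  congr 1
  ext g
  constructor
  · rintro ⟨α, hα, rfl⟩
    refine ⟨⟨Finsupp.equivFunOnFinite.symm α, mem_homogeneousExponents.2 ?_⟩, rfl⟩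
    rwa [Finsupp.degree_eq_sum]
  · rintro ⟨α, rfl⟩
    exact ⟨α, (Finsupp.degree_eq_sum _).symm.trans (mem_homogeneousExponents.1 α.2), rfl⟩

lemma isHomogeneous_of_mem_range_pd (hf : f.IsHomogeneous d) :
    ∀ g ∈ Set.range fun α : homogeneousExponents (Fin N) k => pd α f, g.IsHomogeneous (d - k) := by
  rintro _ ⟨α, rfl⟩
  simpa only [mem_homogeneousExponents.1 α.2] using isHomogeneous_pd hf α

lemma finrank_gradedPiece_milnorIdeal_of_lt (hf : f.IsHomogeneous d) {i : ℕ} (hi : i < d - k) :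
    finrank ℂ (gradedPiece (milnorIdeal f k) i) = (homogeneousExponents (Fin N) i).card := by
  have h := finrank_gradedPiece_add (milnorIdeal f k) i
  rwa [milnorIdeal_eq_span_range, homogeneousSubmodule_inf_idealSpan_eq_bot
    (isHomogeneous_of_mem_range_pd hf) hi, finrank_bot, add_zero, ← milnorIdeal_eq_span_range,
    finrank_homogeneousSubmodule] at h

lemma finrank_gradedPiece_milnorIdeal_add_card (hf : f.IsHomogeneous d)
    (hind : LinearIndependent ℂ fun α : homogeneousExponents (Fin N) k => pd α f) :
    finrank ℂ (gradedPiece (milnorIdeal f k) (d - k)) + (homogeneousExponents (Fin N) k).card =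
      (homogeneousExponents (Fin N) (d - k)).card := by
  have h := finrank_gradedPiece_add (milnorIdeal f k) (d - k)
  rwa [milnorIdeal_eq_span_range, homogeneousSubmodule_inf_idealSpan_eq_span
    (isHomogeneous_of_mem_range_pd hf), finrank_span_eq_card hind, Fintype.card_coe,
    ← milnorIdeal_eq_span_range, finrank_homogeneousSubmodule] at h

end MilnorAlgebra

/-- **Corollary.** For `n ≥ 1`, `d ≥ 2` and `1 ≤ k ≤ d/2` there is a nonempty
Zariski-open subset `U_{d,k}` of `R_d` (given by the nonvanishing of a polynomial `P` in
the coefficients, nonzero at some homogeneous `f₀` of degree `d`) such that for all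
`f ∈ U_{d,k}`:  `dim M^k(f)_i = C(n+i,n)` for `i < d−k`, and
`dim M^k(f)_{d−k} = C(n+d−k,n) − C(n+k,n)`. -/
theorem generic_higher_milnor_hilbert_function
    {n d k : ℕ} (hn : 1 ≤ n) (hd : 2 ≤ d) (hk1 : 1 ≤ k) (hk : 2 * k ≤ d) :
    ∃ P : MvPolynomial (Fin (n + 1) →₀ ℕ) ℂ,
      (∃ f₀ : MvPolynomial (Fin (n + 1)) ℂ, f₀.IsHomogeneous d ∧
        eval (fun α => f₀.coeff α) P ≠ 0) ∧
      ∀ f : MvPolynomial (Fin (n + 1)) ℂ, f.IsHomogeneous d →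
        eval (fun α => f.coeff α) P ≠ 0 →
          (∀ i : ℕ, i < d - k →
            Module.finrank ℂ (gradedPiece (milnorIdeal f k) i) = Nat.choose (n + i) n) ∧
          Module.finrank ℂ (gradedPiece (milnorIdeal f k) (d - k)) =
            Nat.choose (n + (d - k)) n - Nat.choose (n + k) n := by
  let ε : Fin (n + 1) →₀ ℕ := Finsupp.single 0 (d - 2 * k)
  have hε : 2 * k + ε.degree = d := by
    rw [Finsupp.degree_single]
    omega
  obtain ⟨f₀, hf₀, hdet₀⟩ := exists_isHomogeneous_det_catalecticantMinor_ne_zero ℂ k ε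
  refine ⟨(genericCatalecticantMinor ℂ k ε).det, ⟨f₀, hε ▸ hf₀, ?_⟩, fun f hf hdet => ⟨?_, ?_⟩⟩
  · rwa [eval_coeff_det_genericCatalecticantMinor]
  · intro i hi
    rw [finrank_gradedPiece_milnorIdeal_of_lt hf hi, card_homogeneousExponents_fin]
  · rw [eval_coeff_det_genericCatalecticantMinor] at hdet
    have hrank := finrank_gradedPiece_milnorIdeal_add_card hf
      (linearIndependent_pd_of_det_catalecticantMinor_ne_zero hdet)
    rw [card_homogeneousExponents_fin, card_homogeneousExponents_fin] at hrank
    exact Nat.eq_sub_of_add_eq hrank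
end
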